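/- arXiv:1408.5391 — 2 statements merged into one kernel-verified Lean document; each statement's English description precedes it below -/
import Mathlib

section
/- For every integer n ≥ 1, the number of order ideals of the four-color tetrahedral poset T_n({b,y,o,g}) is given by the alternating sign matrix product formula: |J(T_n({b,y,o,g}))| · ∏_{j=0}^{n−1} (n+j)! = ∏_{j=0}^{n−1} (3j+1)!. -/
open scoped Classical

noncomputable section

/-- `V3 n` is the set `{(a,b,c) ∈ ℤ≥0³ : a + b + c ≤ n - 2}`. -/
def V3 (n : ℕ) : Finset (ℤ × ℤ × ℤ) :=
  ((Finset.Icc (0:ℤ) (n:ℤ) ×ˢ Finset.Icc (0:ℤ) (n:ℤ) ×ˢ Finset.Icc (0:ℤ) (n:ℤ)).filter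
    (fun p => p.1 + p.2.1 + p.2.2 ≤ (n:ℤ) - 2))

/-- The six edge vectors. -/
def vr : ℤ × ℤ × ℤ := (1,0,0)
def vg : ℤ × ℤ × ℤ := (0,1,0)
def vy : ℤ × ℤ × ℤ := (0,0,1)
def vb : ℤ × ℤ × ℤ := (-1,1,0)
def vo : ℤ × ℤ × ℤ := (-1,0,1)
def vs : ℤ × ℤ × ℤ := (0,1,-1)

/-- One step: add a vector of `S`, staying inside `W`. -/
def step3 (S : Set (ℤ × ℤ × ℤ)) (W : Finset (ℤ × ℤ × ℤ)) (u v : ℤ × ℤ × ℤ) : Prop :=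
  u ∈ W ∧ v ∈ W ∧ ∃ e ∈ S, v = u + e

/-- The order relation of `T_n(S)`: reflexive-transitive closure of `step3`,
restricted to `W`. -/
def le3 (S : Set (ℤ × ℤ × ℤ)) (W : Finset (ℤ × ℤ × ℤ)) (u v : ℤ × ℤ × ℤ) : Prop :=
  u ∈ W ∧ v ∈ W ∧ Relation.ReflTransGen (step3 S W) u v

/-- An order ideal: a downward closed subset of `W`. -/
def IsIdeal3 (S : Set (ℤ × ℤ × ℤ)) (W : Finset (ℤ × ℤ × ℤ))
    (I : Finset (ℤ × ℤ × ℤ)) : Prop :=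
  I ⊆ W ∧ ∀ u v : ℤ × ℤ × ℤ, le3 S W u v → v ∈ I → u ∈ I

/-- The set of all order ideals of `T_n(S)`. -/
def ideals3 (S : Set (ℤ × ℤ × ℤ)) (W : Finset (ℤ × ℤ × ℤ)) :
    Finset (Finset (ℤ × ℤ × ℤ)) :=
  W.powerset.filter (fun I => IsIdeal3 S W I)

/-- The rank generating function `F(J(T_n(S)),q) = Σ_{I} q^{|I|}`. -/
def genF3 (S : Set (ℤ × ℤ × ℤ)) (W : Finset (ℤ × ℤ × ℤ)) : Polynomial ℤ :=
  ∑ I ∈ ideals3 S W, Polynomial.X ^ I.card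

end

/-! Over each position `(i, j)` the points of `V3 n` form a chain, so an order ideal is recorded by
one threshold per position, and the thresholds are exactly the corner sum matrices of alternating
sign matrices, that is, the height functions of the configurations of the six-vertex model on the
`n × n` lattice with domain wall boundary conditions.

Let `ω` be a primitive cube root of unity and use the corresponding Boltzmann weights. At
`x = y = 1` all of them equal `1 - ω`, so the partition function there is `(1 - ω) ^ (n * n)` times
the number of configurations. For general parameters, the Yang–Baxter equation makes it symmetric
in `y`, its degree in `x 0` is less than `n`, and at `x 0 = ω * y 0` the first row and column
freeze, leaving the partition function of size `n - 1`. These properties determine it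
(Izergin–Korepin), and a ratio of two alternants in the `2 n` variables `x, y` shares them
(Stroganov, Okada): exponents `0, 1, 3, 4, 6, 7, …` over exponents `0, 1, 2, …`.

At `x = y = 1` both alternants vanish. Substituting consecutive powers of `X` for the variables
turns them into determinants `det ((X ^ e j) ^ f i)`; after removing equal powers of `X - 1`, the
value at `X = 1` is a ratio of Vandermonde products, which evaluates to the factorials. -/

open Polynomial

/-! ### The six-vertex model -/

namespace SixVertex

section Weights

variable {R S : Type*} [CommRing R] [CommRing S] {n m : ℕ}

/-- The Boltzmann weight of a vertex with spectral parameters `x` (row) and `y` (column) and edge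
states `l` (left), `t` (top), `r` (right), `b` (bottom). The gauge is chosen so that every weight is
polynomial in `x` and `y`. -/
def weight (ω x y : R) : Bool → Bool → Bool → Bool → R
  | false, false, false, false => x - ω * y
  | true, true, true, true => x - ω * y
  | false, true, false, true => y - ω * x
  | true, false, true, false => y - ω * x
  | false, false, true, true => 1 - ω
  | true, true, false, false => (1 - ω) * (x * y)
  | _, _, _, _ => 0

/-- The R-matrix intertwining two adjacent columns with parameters `y` and `y'`, with edge states
`s`, `t` above and `p`, `q` below. -/
def crossing (ω y y' : R) : Bool → Bool → Bool → Bool → R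
  | false, false, false, false => y' - ω * y
  | true, true, true, true => y' - ω * y
  | false, true, false, true => (1 - ω) * y
  | true, false, true, false => (1 - ω) * y'
  | false, true, true, false => (1 + ω) * (y' - y)
  | true, false, false, true => (1 + ω) * (y' - y)
  | _, _, _, _ => 0

theorem yang_baxter {ω : R} (hω : ω ^ 2 + ω + 1 = 0) (x y y' : R) (l r s t b c : Bool) :
    ∑ p, ∑ q, ∑ m, crossing ω y y' s t p q * (weight ω x y l p m b * weight ω x y' m q r c) =
      ∑ p, ∑ q, ∑ m, weight ω x y' l s m p * weight ω x y m t r q * crossing ω y y' p q b c := by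
  simp only [Fintype.sum_bool]
  cases l <;> cases r <;> cases s <;> cases t <;> cases b <;> cases c <;>
    simp only [weight, crossing, mul_zero, zero_mul, add_zero, zero_add] <;> grind

/-- The weight of a column of `n` vertices with top state `t` and bottom state `b`, as a transfer
matrix indexed by the states of the edges to the left and to the right of the column. -/
def column (ω : R) : (n : ℕ) → (Fin n → R) → R → Bool → Bool →
    Matrix (Fin n → Bool) (Fin n → Bool) R
  | 0, _, _, t, b => Matrix.of fun _ _ => if t = b then 1 else 0
  | n + 1, x, y, t, b => Matrix.of fun l r =>
      ∑ m, weight ω (x 0) y (l 0) t (r 0) m *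
        column ω n (Fin.tail x) y m b (Fin.tail l) (Fin.tail r)

theorem column_zero_apply (ω : R) (x : Fin 0 → R) (y : R) (t b : Bool) (l r : Fin 0 → Bool) :
    column ω 0 x y t b l r = if t = b then 1 else 0 := rfl

theorem column_succ_apply (ω : R) (x : Fin (n + 1) → R) (y : R) (t b : Bool)
    (l r : Fin (n + 1) → Bool) :
    column ω (n + 1) x y t b l r = ∑ m, weight ω (x 0) y (l 0) t (r 0) m *
      column ω n (Fin.tail x) y m b (Fin.tail l) (Fin.tail r) := rfl

theorem sum_fin_succ_bool {M : Type*} [AddCommMonoid M] (f : (Fin (n + 1) → Bool) → M) :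
    ∑ v, f v = ∑ v : Fin n → Bool, f (Fin.cons true v) + ∑ v, f (Fin.cons false v) := by
  rw [← (Fin.consEquiv fun _ => Bool).sum_comp, Fintype.sum_prod_type, Fintype.sum_bool]
  rfl

theorem column_mul_column_succ_apply (ω : R) (x : Fin (n + 1) → R) (y y' : R) (t b t' b' : Bool)
    (l r : Fin (n + 1) → Bool) :
    (column ω (n + 1) x y t b * column ω (n + 1) x y' t' b') l r =
      ∑ p, ∑ q, (∑ m, weight ω (x 0) y (l 0) t m p * weight ω (x 0) y' m t' (r 0) q) *
        (column ω n (Fin.tail x) y p b * column ω n (Fin.tail x) y' q b')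
          (Fin.tail l) (Fin.tail r) := by
  simp only [Matrix.mul_apply, sum_fin_succ_bool, column_succ_apply, Fin.cons_zero, Fin.tail_cons,
    Fintype.sum_bool, mul_add, add_mul, Finset.sum_add_distrib, Finset.mul_sum,
    mul_mul_mul_comm (weight _ _ _ _ _ _ _) (column _ _ _ _ _ _ _ _)]
  abel

theorem crossing_column {ω : R} (hω : ω ^ 2 + ω + 1 = 0) (x : Fin n → R) (y y' : R)
    (s t b c : Bool) (l r : Fin n → Bool) :
    ∑ p, ∑ q, crossing ω y y' s t p q * (column ω n x y p b * column ω n x y' q c) l r =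
      ∑ p, ∑ q, (column ω n x y' s p * column ω n x y t q) l r * crossing ω y y' p q b c := by
  induction n generalizing s t with
  | zero =>
    cases s <;> cases t <;> cases b <;> cases c <;> simp [column_zero_apply, Matrix.mul_apply]
  | succ n ih =>
    simp only [column_mul_column_succ_apply]
    set P := fun p q => (column ω n (Fin.tail x) y p b * column ω n (Fin.tail x) y' q c)
      (Fin.tail l) (Fin.tail r)
    set Q := fun u v p q => (column ω n (Fin.tail x) y' u p * column ω n (Fin.tail x) y v q)
      (Fin.tail l) (Fin.tail r)
    have commute_tail (u v) : ∑ p, ∑ q, crossing ω y y' u v p q * P p q =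
        ∑ p, ∑ q, Q u v p q * crossing ω y y' p q b c := ih _ _ _ _ _
    calc _ = ∑ u, ∑ v, (∑ p, ∑ q, ∑ m, crossing ω y y' s t p q *
          (weight ω (x 0) y (l 0) p m u * weight ω (x 0) y' m q (r 0) v)) * P u v := by
            simp only [Fintype.sum_bool]; ring
      _ = ∑ u, ∑ v, (∑ m, weight ω (x 0) y' (l 0) s m u * weight ω (x 0) y m t (r 0) v) *
          ∑ p, ∑ q, crossing ω y y' u v p q * P p q := by
            simp only [yang_baxter hω (x 0) y y' (l 0) (r 0) s t]
            simp only [Fintype.sum_bool]; ring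
      _ = _ := by
            simp only [commute_tail]
            simp only [Fintype.sum_bool]; ring

/-- The transfer matrix of a column with top state `false` and bottom state `true`. -/
def creation (ω : R) (x : Fin n → R) (y : R) : Matrix (Fin n → Bool) (Fin n → Bool) R :=
  column ω n x y false true

theorem creation_commute [IsDomain R] {ω : R} (hω : ω ^ 2 + ω + 1 = 0) (x : Fin n → R) {y y' : R}
    (hy : y' ≠ ω * y) : Commute (creation ω x y) (creation ω x y') := by
  ext l r
  have h := crossing_column hω x y y' false false true true l r
  simp only [Fintype.sum_bool, crossing, zero_mul, mul_zero, add_zero, zero_add] at h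
  rw [mul_comm] at h
  exact mul_right_cancel₀ (sub_ne_zero.2 hy) h

/-- The partition function of an `n × m` lattice with left states `l`, right states `r`, top states
`false` and bottom states `true`. -/
def latticeSum (ω : R) (x : Fin n → R) (y : Fin m → R) (l r : Fin n → Bool) : R :=
  (List.ofFn fun j => creation ω x (y j)).prod l r

/-- The partition function with domain wall boundary conditions. -/
def partitionFun (ω : R) (x y : Fin n → R) : R :=
  latticeSum ω x y (fun _ => false) (fun _ => true)

theorem partitionFun_comp_perm [IsDomain R] {ω : R} (hω : ω ^ 2 + ω + 1 = 0) (x y : Fin n → R)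
    (hy : Pairwise fun i j => y j ≠ ω * y i) (σ : Equiv.Perm (Fin n)) :
    partitionFun ω x (y ∘ σ) = partitionFun ω x y := by
  have perm := σ.ofFn_comp_perm fun j => creation ω x (y j)
  refine congrFun (congrFun (perm.prod_eq' (List.pairwise_ofFn.2 fun i j hij => ?_)) _) _
  exact creation_commute hω x (hy (σ.injective.ne hij.ne))

theorem map_weight (f : R →+* S) (ω x y : R) (l t r b : Bool) :
    f (weight ω x y l t r b) = weight (f ω) (f x) (f y) l t r b := by
  cases l <;> cases t <;> cases r <;> cases b <;> simp [weight]

theorem map_column (f : R →+* S) (ω : R) (x : Fin n → R) (y : R) (t b : Bool)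
    (l r : Fin n → Bool) :
    f (column ω n x y t b l r) = column (f ω) n (f ∘ x) (f y) t b l r := by
  induction n generalizing t with
  | zero => simp [column_zero_apply, apply_ite f]
  | succ n ih =>
    simp only [column_succ_apply, map_sum, map_mul, map_weight, ih]
    rfl

end Weights

section Lattice

variable {R S : Type*} [CommRing R] [CommRing S] {n m : ℕ}

theorem latticeSum_zero (ω : R) (x : Fin n → R) (y : Fin 0 → R) (l r : Fin n → Bool) :
    latticeSum ω x y l r = if l = r then 1 else 0 := by
  simp [latticeSum, Matrix.one_apply]

theorem latticeSum_succ (ω : R) (x : Fin n → R) (y : Fin (m + 1) → R) (l r : Fin n → Bool) :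
    latticeSum ω x y l r = ∑ k, creation ω x (y 0) l k * latticeSum ω x (Fin.tail y) k r := by
  rw [latticeSum, List.ofFn_succ, List.prod_cons, Matrix.mul_apply]
  rfl

theorem map_creation (f : R →+* S) (ω : R) (x : Fin n → R) (y : R) (l r : Fin n → Bool) :
    f (creation ω x y l r) = creation (f ω) (f ∘ x) (f y) l r :=
  map_column ..

theorem map_latticeSum (f : R →+* S) (ω : R) (x : Fin n → R) (y : Fin m → R) (l r : Fin n → Bool) :
    f (latticeSum ω x y l r) = latticeSum (f ω) (f ∘ x) (f ∘ y) l r := by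
  induction m generalizing l with
  | zero => simp [latticeSum_zero, apply_ite f]
  | succ m ih =>
    simp only [latticeSum_succ, map_sum, map_mul, map_creation, ih]
    rfl

theorem map_partitionFun (f : R →+* S) (ω : R) (x y : Fin n → R) :
    f (partitionFun ω x y) = partitionFun (f ω) (f ∘ x) (f ∘ y) :=
  map_latticeSum ..

theorem column_true_true_apply_false (ω : R) (x : Fin n → R) (y : R) (r : Fin n → Bool) :
    column ω n x y true true (fun _ => false) r =
      if r = fun _ => false then ∏ i, (y - ω * x i) else 0 := by
  induction n with
  | zero => simp [column_zero_apply, Subsingleton.elim r fun _ => false]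
  | succ n ih =>
    have eq_false_iff : (r = fun _ => false) ↔ r 0 = false ∧ Fin.tail r = fun _ => false := by
      simp [funext_iff, Fin.forall_fin_succ, Fin.tail]
    have tail_false : Fin.tail (fun _ : Fin (n + 1) => false) = fun _ => false := rfl
    rw [column_succ_apply, tail_false, Fintype.sum_bool, ih, Fin.prod_univ_succ]
    simp only [eq_false_iff]
    cases r 0 <;> simp [weight, Fin.tail]

theorem creation_cons_true (ω : R) (x : Fin (n + 1) → R) (y : R) (l k : Fin n → Bool) (b : Bool) :
    creation ω x y (Fin.cons true l) (Fin.cons b k) =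
      if b = true then (y - ω * x 0) * creation ω (Fin.tail x) y l k else 0 := by
  cases b <;> simp [creation, column_succ_apply, weight]

theorem creation_cons_false (ω : R) (x : Fin (n + 1) → R) (y : R) (l k : Fin n → Bool) (b : Bool) :
    creation ω x y (Fin.cons false l) (Fin.cons b k) =
      if b = true then (1 - ω) * column ω n (Fin.tail x) y true true l k
      else (x 0 - ω * y) * creation ω (Fin.tail x) y l k := by
  cases b <;> simp [creation, column_succ_apply, weight]

theorem latticeSum_cons_true_cons_true (ω : R) (x : Fin (n + 1) → R) (y : Fin m → R)
    (l r : Fin n → Bool) :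
    latticeSum ω x y (Fin.cons true l) (Fin.cons true r) =
      (∏ j, (y j - ω * x 0)) * latticeSum ω (Fin.tail x) y l r := by
  induction m generalizing l with
  | zero => simp [latticeSum_zero]
  | succ m ih =>
    simp only [latticeSum_succ, sum_fin_succ_bool, creation_cons_true, ih, if_true,
      Bool.false_eq_true, if_false, zero_mul, Finset.sum_const_zero, add_zero]
    rw [Fin.prod_univ_succ, Finset.mul_sum]
    refine Finset.sum_congr rfl fun k _ => ?_
    simp only [Fin.tail]
    ring

theorem const_eq_cons (b : Bool) : (fun _ : Fin (n + 1) => b) = Fin.cons b fun _ : Fin n => b :=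
  (Fin.cons_self_tail _).symm

/-- When the weight `x 0 - ω * y 0` of the corner vertex vanishes, the first row and the first
column are frozen. -/
theorem partitionFun_eq_of_corner (ω : R) {x y : Fin (n + 1) → R} (h : x 0 = ω * y 0) :
    partitionFun ω x y = (1 - ω) * (∏ i : Fin n, (y 0 - ω * x i.succ)) *
      (∏ j : Fin n, (y j.succ - ω * x 0)) * partitionFun ω (Fin.tail x) (Fin.tail y) := by
  rw [partitionFun, latticeSum_succ, sum_fin_succ_bool, const_eq_cons false, const_eq_cons true]
  simp only [creation_cons_false, h, sub_self, zero_mul, if_true, Bool.false_eq_true, if_false,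
    Finset.sum_const_zero, add_zero, latticeSum_cons_true_cons_true, column_true_true_apply_false]
  rw [Finset.sum_eq_single (fun _ => false) (by simp +contextual) (by simp), if_pos rfl]
  simp only [partitionFun, Fin.tail]
  ring

end Lattice

section Degree

variable {R : Type*} [CommRing R] {n m : ℕ}

theorem mul_mem_degreeLT {d e : ℕ} {p q : R[X]} (hp : p ∈ degreeLT R d) (hq : q.natDegree ≤ e) :
    p * q ∈ degreeLT R (d + e) := by
  rw [mem_degreeLT, degree_lt_iff_coeff_zero] at *
  intro k hk
  rw [coeff_mul]
  refine Finset.sum_eq_zero fun ij hij => ?_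
  rw [Finset.HasAntidiagonal.mem_antidiagonal] at hij
  rcases le_or_gt d ij.1 with h | h
  · rw [hp _ h, zero_mul]
  · rw [coeff_eq_zero_of_natDegree_lt (p := q) (by omega), mul_zero]

theorem latticeSum_cons_X_mem_degreeLT (ω : R) (x : Fin n → R) (y : Fin m → R)
    (l r : Fin n → Bool) :
    latticeSum (C ω) (Fin.cons X (C ∘ x)) (C ∘ y) (Fin.cons false l) (Fin.cons true r) ∈
      degreeLT R m := by
  induction m generalizing l with
  | zero => simp [latticeSum_zero]
  | succ m ih =>
    have tail_comp : Fin.tail (C ∘ y) = C ∘ Fin.tail y := rfl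
    have natDegree_prod : (∏ j : Fin m, (C (Fin.tail y j) - C ω * X)).natDegree ≤ m := by
      refine (natDegree_prod_le _ _).trans ((Finset.sum_le_card_nsmul _ _ 1 fun j _ => ?_).trans ?_)
      · compute_degree
      · simp
    rw [latticeSum_succ, sum_fin_succ_bool]
    simp only [creation_cons_false, if_true, Bool.false_eq_true, if_false, tail_comp,
      latticeSum_cons_true_cons_true, Fin.cons_zero, Fin.tail_cons, Function.comp_apply,
      ← map_creation, ← map_column, ← map_latticeSum]
    refine Submodule.add_mem _ (Submodule.sum_mem _ fun k _ => ?_)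
      (Submodule.sum_mem _ fun k _ => ?_)
    · suffices h : C ((1 - ω) * column ω n x (y 0) true true l k *
          latticeSum ω x (Fin.tail y) k r) * ∏ j : Fin m, (C (Fin.tail y j) - C ω * X) ∈
          degreeLT R (1 + m) by
        rw [add_comm] at h
        simpa only [map_mul, map_sub, map_one, mul_assoc, mul_comm (C (latticeSum _ _ _ _ _))]
          using h
      exact mul_mem_degreeLT (mem_degreeLT.2 degree_C_lt) natDegree_prod
    · rw [mul_comm]
      exact mul_mem_degreeLT (ih _ k) (by compute_degree)

theorem natDegree_partitionFun_cons_X_le (ω : R) (x : Fin n → R) (y : Fin (n + 1) → R) :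
    (partitionFun (C ω) (Fin.cons X (C ∘ x)) (C ∘ y)).natDegree ≤ n := by
  have h := latticeSum_cons_X_mem_degreeLT ω x y (fun _ => false) fun _ => true
  rw [← const_eq_cons, ← const_eq_cons] at h
  exact natDegree_le_iff_coeff_eq_zero.2 ((degree_lt_iff_coeff_zero _ _).1 (mem_degreeLT.1 h))

end Degree
end SixVertex

/-! ### Alternants -/

section Alternant

variable {R S ι : Type*} [CommRing R] [CommRing S] [Fintype ι] [DecidableEq ι]

/-- The alternant `det (z i ^ e j)` with exponents `e` and variables `z`. -/
def alternant (e : ι → ℕ) (z : ι → R) : R :=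
  (Matrix.of fun i j => z i ^ e j).det

theorem map_alternant (f : R →+* S) (e : ι → ℕ) (z : ι → R) :
    f (alternant e z) = alternant e (f ∘ z) := by
  rw [alternant, RingHom.map_det]
  congr 1
  ext i j
  simp

theorem alternant_comp_perm (e : ι → ℕ) (z : ι → R) (σ : Equiv.Perm ι) :
    alternant e (z ∘ σ) = (Equiv.Perm.sign σ : ℤ) * alternant e z :=
  Matrix.det_permute σ (Matrix.of fun i j => z i ^ e j)

theorem alternant_eq_zero (e : ι → ℕ) {z : ι → R} {i j : ι} (hij : i ≠ j) (h : z i = z j) :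
    alternant e z = 0 :=
  Matrix.det_zero_of_row_eq hij (by ext k; simp [h])

theorem alternant_pow_comm (e f : ι → ℕ) (t : R) :
    alternant e (fun i => t ^ f i) = alternant f fun i => t ^ e i := by
  rw [alternant, ← Matrix.det_transpose, alternant]
  congr 1
  ext i j
  simp [← pow_mul, mul_comm]

theorem natDegree_det_le_sum (M : Matrix ι ι R[X]) {d : ι → ℕ}
    (h : ∀ i j, (M i j).natDegree ≤ d i) : M.det.natDegree ≤ ∑ i, d i := by
  rw [← Matrix.det_transpose, Matrix.det_apply]
  refine natDegree_sum_le_of_forall_le _ _ fun σ _ => (natDegree_smul_le _ _).trans ?_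
  exact (natDegree_prod_le _ _).trans (Finset.sum_le_sum fun i _ => h i _)

theorem natDegree_alternant_le {e : ι → ℕ} {d : ℕ} (he : ∀ i, e i ≤ d) {z : ι → R[X]} (k : ι)
    (hk : (z k).natDegree ≤ 1) (hz : ∀ i ≠ k, (z i).natDegree = 0) :
    (alternant e z).natDegree ≤ d := by
  refine (natDegree_det_le_sum _ (d := Pi.single k d) fun i j => ?_).trans
    (Fintype.sum_pi_single' k d).le
  refine natDegree_pow_le.trans ?_
  rcases eq_or_ne i k with rfl | hik
  · simpa using Nat.mul_le_mul (he j) hk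
  · simp [hz i hik]

theorem prod_univ_Ioi {ι M : Type*} [Fintype ι] [CommMonoid M]
    [LinearOrder ι] [LocallyFiniteOrderTop ι]
    (f : ι → ι → M) : ∏ i, ∏ j ∈ Finset.Ioi i, f i j = ∏ i, ∏ j, if i < j then f i j else 1 := by
  simp only [← Finset.prod_filter, Finset.filter_lt_eq_Ioi]

theorem det_vandermonde_append {m n : ℕ} (x : Fin m → R) (y : Fin n → R) :
    (Matrix.vandermonde (Fin.append x y)).det =
      (Matrix.vandermonde x).det * (Matrix.vandermonde y).det * ∏ i, ∏ j, (y j - x i) := by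
  have castAdd_lt (i j : Fin m) : Fin.castAdd n i < Fin.castAdd n j ↔ i < j := Iff.rfl
  have not_lt (i : Fin m) (j : Fin n) : ¬ Fin.natAdd m j < Fin.castAdd n i := by
    simp only [Fin.lt_def, Fin.val_castAdd, Fin.val_natAdd]; omega
  have lt (i : Fin m) (j : Fin n) : Fin.castAdd n i < Fin.natAdd m j := by
    simp only [Fin.lt_def, Fin.val_castAdd, Fin.val_natAdd]; omega
  simp only [Matrix.det_vandermonde, prod_univ_Ioi, Fin.prod_univ_add, Fin.append_left,
    Fin.append_right, lt, not_lt, if_true, if_false, Finset.prod_mul_distrib,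
    Finset.prod_const_one, Fin.natAdd_lt_natAdd_iff, castAdd_lt]
  ring

/-- The exponents `0, 1, …, 2 n - 1` of the Vandermonde determinant in `2 n` variables. -/
def consecExp (n : ℕ) : Fin n ⊕ Fin n → ℕ :=
  Sum.elim (fun i => i) fun i => n + i

/-- The exponents `0, 3, …, 3 n - 3` and `1, 4, …, 3 n - 2`. -/
def gapExp (n : ℕ) : Fin n ⊕ Fin n → ℕ :=
  Sum.elim (fun i => 3 * i) fun i => 3 * i + 1

variable {n : ℕ}

theorem alternant_consecExp (x y : Fin n → R) :
    alternant (consecExp n) (Sum.elim x y) =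
      (Matrix.vandermonde x).det * (Matrix.vandermonde y).det * ∏ i, ∏ j, (y j - x i) := by
  rw [← det_vandermonde_append, ← Matrix.det_submatrix_equiv_self finSumFinEquiv, alternant]
  congr 1
  ext (i | i) (j | j) <;>
    simp only [consecExp, Matrix.of_apply, Matrix.submatrix_apply, Matrix.vandermonde_apply,
      finSumFinEquiv_apply_left, finSumFinEquiv_apply_right, Fin.append_left, Fin.append_right,
      Fin.val_castAdd, Fin.val_natAdd, Sum.elim_inl, Sum.elim_inr]

/-- The two first indices of a disjoint union, followed by the remaining ones. -/
def headsTailsEquiv (n : ℕ) : Fin 2 ⊕ (Fin n ⊕ Fin n) ≃ Fin (n + 1) ⊕ Fin (n + 1) where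
  toFun := Sum.elim ![Sum.inl 0, Sum.inr 0] (Sum.map Fin.succ Fin.succ)
  invFun := Sum.elim (Fin.cons (Sum.inl 0) (Sum.inr ∘ Sum.inl))
    (Fin.cons (Sum.inl 1) (Sum.inr ∘ Sum.inr))
  left_inv := by
    rintro (i | i | i)
    · fin_cases i <;> simp
    all_goals simp
  right_inv := by
    rintro (i | i) <;> cases i using Fin.cases <;> simp

/-- The unitriangular matrix of the column operations subtracting `c` times each column from the
next one. -/
def colSub (c : R) (n : ℕ) : Matrix (Fin (n + 1)) (Fin (n + 1)) R :=
  Matrix.of fun i => Fin.cons (if i = 0 then 1 else 0)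
    fun j => (if i = j.succ then 1 else 0) - c * if i = j.castSucc then 1 else 0

theorem det_colSub (c : R) (n : ℕ) : (colSub c n).det = 1 := by
  rw [← Matrix.det_eq_of_forall_col_eq_smul_add_pred (A := 1) (fun _ => c), Matrix.det_one] <;>
    simp [colSub, Matrix.one_apply]

theorem sum_mul_colSub_zero (c : R) (f : Fin (n + 1) → R) : ∑ i, f i * colSub c n i 0 = f 0 := by
  simp [colSub]

theorem sum_mul_colSub_succ (c : R) (f : Fin (n + 1) → R) (j : Fin n) :
    ∑ i, f i * colSub c n i j.succ = f j.succ - c * f j.castSucc := by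
  simp [colSub, mul_sub, mul_comm c]

theorem alternant_gapExp_succ {x y : Fin (n + 1) → R} (h : x 0 ^ 3 = y 0 ^ 3) :
    alternant (gapExp (n + 1)) (Sum.elim x y) =
      (y 0 - x 0) * (∏ i : Fin n, (x i.succ ^ 3 - y 0 ^ 3)) *
        (∏ j : Fin n, (y j.succ ^ 3 - y 0 ^ 3)) *
        alternant (gapExp n) (Sum.elim (Fin.tail x) (Fin.tail y)) := by
  set c := y 0 ^ 3 with hc
  set w := Sum.elim x y with hw
  set z := Sum.elim (Fin.tail x) (Fin.tail y) with hz
  set M := Matrix.of fun i j => w i ^ gapExp (n + 1) j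
  set U := Matrix.fromBlocks (colSub c n) 0 0 (colSub c n)
  have mul_inl_zero (i) : (M * U) i (Sum.inl 0) = 1 := by
    simp [M, U, Matrix.mul_apply, gapExp, sum_mul_colSub_zero]
  have mul_inr_zero (i) : (M * U) i (Sum.inr 0) = w i := by
    simp [M, U, Matrix.mul_apply, gapExp, sum_mul_colSub_zero]
  have mul_succ (i k) :
      (M * U) i (Sum.map Fin.succ Fin.succ k) = (w i ^ 3 - c) * w i ^ gapExp n k := by
    rcases k with k | k <;> simp [M, U, Matrix.mul_apply, gapExp, sum_mul_colSub_succ] <;> ring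
  have blocks : (M * U).submatrix (headsTailsEquiv n) (headsTailsEquiv n) =
      Matrix.fromBlocks !![1, x 0; 1, y 0] 0 (Matrix.of fun i => ![1, z i])
        (Matrix.of fun i j => (z i ^ 3 - c) * z i ^ gapExp n j) := by
    ext (i | i) (j | j)
    · fin_cases i <;> fin_cases j <;> simp [headsTailsEquiv, mul_inl_zero, mul_inr_zero, hw]
    · fin_cases i <;> simp [headsTailsEquiv, mul_succ, hw, h, hc]
    · rcases i with i | i <;> fin_cases j <;>
        simp [headsTailsEquiv, mul_inl_zero, mul_inr_zero, hw, hz, Fin.tail]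
    · rcases i with i | i <;> simp [headsTailsEquiv, mul_succ, hw, hz, Fin.tail]
  have det_U : U.det = 1 := by simp [U, Matrix.det_fromBlocks_zero₂₁, det_colSub]
  have det_tails : (Matrix.of fun i j => (z i ^ 3 - c) * z i ^ gapExp n j).det =
      (∏ i, (z i ^ 3 - c)) * alternant (gapExp n) z :=
    Matrix.det_mul_column _ (Matrix.of fun i j => z i ^ gapExp n j)
  rw [alternant, ← mul_one M.det, ← det_U, ← Matrix.det_mul,
    ← Matrix.det_submatrix_equiv_self (headsTailsEquiv n), blocks, Matrix.det_fromBlocks_zero₁₂,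
    Matrix.det_fin_two_of, det_tails, Fintype.prod_sum_type, one_mul, mul_one]
  simp only [hz, Sum.elim_inl, Sum.elim_inr, Fin.tail, mul_assoc]

end Alternant

/-! ### The partition function as a ratio of alternants -/

namespace SixVertex

section Ratio

variable {R S : Type*} [CommRing R] [CommRing S] {n : ℕ}

/-- The difference of the two sides of `partitionFun_mul_alternant`, Stroganov's and Okada's
expression of the partition function at a cube root of unity as a ratio of alternants. -/
def ratioDefect (ω : R) (x y : Fin n → R) : R :=
  partitionFun ω x y * alternant (consecExp n) (Sum.elim x y) -
    (1 - ω) ^ n * ω ^ n.choose 2 * alternant (gapExp n) (Sum.elim x y)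

theorem map_ratioDefect (f : R →+* S) (ω : R) (x y : Fin n → R) :
    f (ratioDefect ω x y) = ratioDefect (f ω) (f ∘ x) (f ∘ y) := by
  simp only [ratioDefect, map_sub, map_mul, map_pow, map_one, map_partitionFun, map_alternant,
    Sum.comp_elim]

theorem ratioDefect_eq_zero_of_eq (ω : R) {x y : Fin n → R} {i j : Fin n ⊕ Fin n} (hij : i ≠ j)
    (h : Sum.elim x y i = Sum.elim x y j) : ratioDefect ω x y = 0 := by
  simp only [ratioDefect, alternant_eq_zero _ hij h, mul_zero, sub_zero]

theorem ratioDefect_comp_perm [IsDomain R] {ω : R} (hω : ω ^ 2 + ω + 1 = 0) (x y : Fin n → R)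
    (hy : Pairwise fun i j => y j ≠ ω * y i) (σ : Equiv.Perm (Fin n)) :
    ratioDefect ω x (y ∘ σ) = (Equiv.Perm.sign σ : ℤ) * ratioDefect ω x y := by
  have elim_comp : Sum.elim x (y ∘ σ) = Sum.elim x y ∘ Equiv.Perm.sumCongr 1 σ := by
    ext (i | i) <;> rfl
  have sign_sumCongr : Equiv.Perm.sign (Equiv.Perm.sumCongr (1 : Equiv.Perm (Fin n)) σ) =
      Equiv.Perm.sign σ := by
    rw [Equiv.Perm.sign_sumCongr, Equiv.Perm.sign_one, one_mul]
  simp only [ratioDefect, partitionFun_comp_perm hω x y hy, elim_comp, alternant_comp_perm,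
    sign_sumCongr]
  ring

theorem det_vandermonde_succ (v : Fin (n + 1) → R) :
    (Matrix.vandermonde v).det =
      (∏ i : Fin n, (v i.succ - v 0)) * (Matrix.vandermonde (Fin.tail v)).det := by
  simp only [Matrix.det_vandermonde, Fin.prod_univ_succ, Fin.prod_Ioi_zero, Fin.prod_Ioi_succ,
    Fin.tail]

theorem partitionFun_mul_alternant_of_corner {ω : R} (hω : ω ^ 2 + ω + 1 = 0)
    {x y : Fin (n + 1) → R} (h : x 0 = ω * y 0) :
    partitionFun ω x y * alternant (consecExp (n + 1)) (Sum.elim x y) =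
      (1 - ω) * ω ^ n * ((y 0 - x 0) * (∏ i : Fin n, (x i.succ ^ 3 - y 0 ^ 3)) *
        ∏ j : Fin n, (y j.succ ^ 3 - y 0 ^ 3)) * (partitionFun ω (Fin.tail x) (Fin.tail y) *
          alternant (consecExp n) (Sum.elim (Fin.tail x) (Fin.tail y))) := by
  have row : ω ^ n * ∏ i : Fin n, (x i.succ ^ 3 - y 0 ^ 3) = (∏ i : Fin n, (y 0 - ω * x i.succ)) *
      (∏ i : Fin n, (x i.succ - x 0)) * ∏ i : Fin n, (y 0 - x i.succ) := by
    rw [← Fin.prod_const, ← Finset.prod_mul_distrib, ← Finset.prod_mul_distrib,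
      ← Finset.prod_mul_distrib]
    refine Finset.prod_congr rfl fun i _ => ?_
    rw [h]
    grind
  have col : ∏ j : Fin n, (y j.succ ^ 3 - y 0 ^ 3) = (∏ j : Fin n, (y j.succ - ω * x 0)) *
      (∏ j : Fin n, (y j.succ - y 0)) * ∏ j : Fin n, (y j.succ - x 0) := by
    rw [← Finset.prod_mul_distrib, ← Finset.prod_mul_distrib]
    refine Finset.prod_congr rfl fun j _ => ?_
    rw [h]
    grind
  rw [partitionFun_eq_of_corner ω h, alternant_consecExp, alternant_consecExp,
    det_vandermonde_succ x, det_vandermonde_succ y]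
  simp only [Fin.prod_univ_succ, Finset.prod_mul_distrib, Fin.tail]
  set rest := (1 - ω) * (y 0 - x 0) * (partitionFun ω (Fin.tail x) (Fin.tail y) *
    (Matrix.vandermonde (Fin.tail x)).det * (Matrix.vandermonde (Fin.tail y)).det *
    ∏ i : Fin n, ∏ j : Fin n, (y j.succ - x i.succ))
  linear_combination -(rest * ∏ j : Fin n, (y j.succ ^ 3 - y 0 ^ 3)) * row - rest *
    ((∏ i : Fin n, (y 0 - ω * x i.succ)) * (∏ i : Fin n, (x i.succ - x 0)) *
      ∏ i : Fin n, (y 0 - x i.succ)) * col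

theorem ratioDefect_of_corner {ω : R} (hω : ω ^ 2 + ω + 1 = 0) {x y : Fin (n + 1) → R}
    (h : x 0 = ω * y 0) : ∃ c, ratioDefect ω x y = c * ratioDefect ω (Fin.tail x) (Fin.tail y) := by
  refine ⟨(1 - ω) * ω ^ n * ((y 0 - x 0) * (∏ i : Fin n, (x i.succ ^ 3 - y 0 ^ 3)) *
        ∏ j : Fin n, (y j.succ ^ 3 - y 0 ^ 3)), ?_⟩
  have cube_eq : x 0 ^ 3 = y 0 ^ 3 := by rw [h]; grind
  rw [ratioDefect, partitionFun_mul_alternant_of_corner hω h, alternant_gapExp_succ cube_eq,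
    ratioDefect, Nat.choose_succ_succ' n 1, Nat.choose_one_right]
  ring

theorem ratioDefect_eq_zero_of_corner [IsDomain R] {ω : R} (hω : ω ^ 2 + ω + 1 = 0)
    {x y : Fin (n + 1) → R} (hy : Pairwise fun i j => y j ≠ ω * y i) {j : Fin (n + 1)}
    (h : x 0 = ω * y j)
    (tail_eq_zero : ratioDefect ω (Fin.tail x) (Fin.tail (y ∘ Equiv.swap 0 j)) = 0) :
    ratioDefect ω x y = 0 := by
  obtain ⟨c, hc⟩ := ratioDefect_of_corner hω (x := x) (y := y ∘ Equiv.swap 0 j) (by simpa using h)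
  rw [tail_eq_zero, mul_zero, ratioDefect_comp_perm hω x y hy] at hc
  exact (((Equiv.swap 0 j).sign.isUnit.map (Int.castRingHom R)).mul_right_eq_zero).1 hc

theorem natDegree_ratioDefect_cons_X_le (ω : R) (x : Fin n → R) (y : Fin (n + 1) → R) :
    (ratioDefect (C ω) (Fin.cons X (C ∘ x)) (C ∘ y)).natDegree ≤ 3 * n + 1 := by
  have natDegree_alternant {e : Fin (n + 1) ⊕ Fin (n + 1) → ℕ} {d : ℕ} (he : ∀ i, e i ≤ d) :
      (alternant e (Sum.elim (Fin.cons X (C ∘ x)) (C ∘ y))).natDegree ≤ d := by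
    refine natDegree_alternant_le he (Sum.inl 0) natDegree_X_le ?_
    rintro (i | i) hi
    · cases i using Fin.cases <;> simp_all
    · simp
  have natDegree_const : ((1 - C ω) ^ (n + 1) * C ω ^ (n + 1).choose 2).natDegree = 0 := by
    have eq_C : (1 - C ω) ^ (n + 1) * C ω ^ (n + 1).choose 2 =
        C ((1 - ω) ^ (n + 1) * ω ^ (n + 1).choose 2) := by
      simp only [map_mul, map_pow, map_sub, map_one]
    rw [eq_C, natDegree_C]
  refine (natDegree_sub_le _ _).trans (max_le ?_ ?_) <;> refine natDegree_mul_le.trans ?_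
  · have consec := natDegree_alternant (e := consecExp (n + 1)) (d := 2 * n + 1) (by
      rintro (i | i) <;> simp only [consecExp, Sum.elim_inl, Sum.elim_inr] <;> omega)
    have := natDegree_partitionFun_cons_X_le ω x y
    omega
  · have gap := natDegree_alternant (e := gapExp (n + 1)) (d := 3 * n + 1) (by
      rintro (i | i) <;> simp only [gapExp, Sum.elim_inl, Sum.elim_inr] <;> omega)
    omega

theorem ratioDefect_eq_zero [IsDomain R] {ω : R} (hω : ω ^ 2 + ω + 1 = 0) {x y : Fin n → R}
    (hxy : Function.Injective (Sum.elim x (Sum.elim y (ω • y)))) : ratioDefect ω x y = 0 := by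
  induction n with
  | zero => simp [ratioDefect, partitionFun, latticeSum_zero, alternant, funext_iff]
  | succ n ih =>
    have pairwise : Pairwise fun i j => y j ≠ ω * y i := fun i j _ h => by
      simpa using hxy.ne (Sum.inr_injective.ne (Sum.inl_ne_inr (a := j) (b := i))) h
    set P := ratioDefect (C ω) (Fin.cons X (C ∘ Fin.tail x)) (C ∘ y)
    have eval_P (u : R) : P.eval u = ratioDefect ω (Fin.cons u (Fin.tail x)) y := by
      have eval_comp_C {m : ℕ} (z : Fin m → R) : eval u ∘ C ∘ z = z := by ext i; simp
      have eval_cons : eval u ∘ Fin.cons X (C ∘ Fin.tail x) =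
          (Fin.cons u (Fin.tail x) : Fin (n + 1) → R) := by
        ext i; cases i using Fin.cases <;> simp
      have := map_ratioDefect (evalRingHom u) (C ω) (Fin.cons X (C ∘ Fin.tail x)) (C ∘ y)
      rwa [coe_evalRingHom, eval_C, eval_cons, eval_comp_C] at this
    have eval_eq_zero : ∀ i, P.eval (Sum.elim (Fin.tail x) (Sum.elim y (ω • y)) i) = 0 := by
      rintro (i | j | j) <;> rw [eval_P]
      · exact ratioDefect_eq_zero_of_eq ω (i := Sum.inl 0) (j := Sum.inl i.succ)
          (by simp [Fin.ext_iff]) (by simp)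
      · exact ratioDefect_eq_zero_of_eq ω (i := Sum.inl 0) (j := Sum.inr j) (by simp) (by simp)
      · refine ratioDefect_eq_zero_of_corner hω pairwise (j := j) (by simp) (ih ?_)
        set g : Fin n → Fin (n + 1) := Equiv.swap 0 j ∘ Fin.succ
        have g_injective : Function.Injective g :=
          (Equiv.injective _).comp (Fin.succ_injective n)
        convert hxy.comp ((Fin.succ_injective n).sumMap (g_injective.sumMap g_injective)) using 1
        ext (i | i | i) <;> rfl
    have roots_injective : Function.Injective (Sum.elim (Fin.tail x) (Sum.elim y (ω • y))) := by
      convert hxy.comp ((Fin.succ_injective n).sumMap Function.injective_id) using 1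
      ext (i | i | i) <;> rfl
    have P_eq_zero : P = 0 := eq_zero_of_natDegree_lt_card_of_eval_eq_zero P roots_injective
      eval_eq_zero ((natDegree_ratioDefect_cons_X_le _ _ _).trans_lt (by simp; omega))
    rw [← Fin.cons_self_tail x, ← eval_P, P_eq_zero, eval_zero]

theorem partitionFun_mul_alternant [IsDomain R] {ω : R} (hω : ω ^ 2 + ω + 1 = 0) {x y : Fin n → R}
    (hxy : Function.Injective (Sum.elim x (Sum.elim y (ω • y)))) :
    partitionFun ω x y * alternant (consecExp n) (Sum.elim x y) =
      (1 - ω) ^ n * ω ^ n.choose 2 * alternant (gapExp n) (Sum.elim x y) :=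
  sub_eq_zero.1 (ratioDefect_eq_zero hω hxy)

end Ratio

end SixVertex

/-! ### The homogeneous limit -/

section AlternantAtPowers

variable {R ι : Type*} [CommRing R] [Fintype ι] [DecidableEq ι] {n : ℕ}

theorem alternant_mul (e : ι → ℕ) (a : R) (z : ι → R) :
    alternant e (fun i => a * z i) = a ^ (∑ i, e i) * alternant e z := by
  simp only [alternant, mul_pow]
  rw [← Finset.prod_pow_eq_pow_sum]
  exact Matrix.det_mul_row (fun j => a ^ e j) (Matrix.of fun i j => z i ^ e j)

theorem alternant_consecExp_add (b : R) (z : Fin n ⊕ Fin n → R) :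
    alternant (consecExp n) (fun i => z i + b) = alternant (consecExp n) z := by
  have add_elim (x y : Fin n → R) :
      alternant (consecExp n) (Sum.elim (fun i => x i + b) fun i => y i + b) =
        alternant (consecExp n) (Sum.elim x y) := by
    simp only [alternant_consecExp, Matrix.det_vandermonde_add, add_sub_add_right_eq_sub]
  convert add_elim (z ∘ Sum.inl) (z ∘ Sum.inr) using 2
  · ext (i | i) <;> rfl
  · exact (Sum.elim_comp_inl_inr z).symm

theorem alternant_consecExp_X_pow (e : Fin n ⊕ Fin n → ℕ) :
    alternant (consecExp n) (fun k => (X : R[X]) ^ e k) = (X - 1) ^ (∑ k, consecExp n k) *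
      alternant (consecExp n) fun k => ∑ m ∈ Finset.range (e k), X ^ m := by
  rw [← alternant_mul, ← alternant_consecExp_add 1 (fun k => (X - 1) * _)]
  simp only [mul_geom_sum, sub_add_cancel]

theorem eval_one_alternant_geom_sum (f e : ι → ℕ) :
    (alternant f fun k => ∑ m ∈ Finset.range (e k), (X : R[X]) ^ m).eval 1 =
      alternant f fun k => (e k : R) := by
  rw [← coe_evalRingHom, map_alternant]
  congr 1
  ext k
  simp [eval_finsetSum]

theorem sum_fin_val_eq_choose (n : ℕ) : ∑ i : Fin n, (i : ℕ) = n.choose 2 := by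
  rw [Fin.sum_univ_eq_sum_range fun i => i, Finset.sum_range_id, Nat.choose_two_right]

theorem alternant_consecExp_gapExp (n : ℕ) :
    alternant (consecExp n) (fun k => (gapExp n k : R)) = 3 ^ (2 * n.choose 2) *
      (Matrix.vandermonde fun i : Fin n => (i : R)).det ^ 2 *
        ∏ i : Fin n, ∏ j : Fin n, (3 * (j : R) + 1 - 3 * i) := by
  have elim_eq : (fun k => (gapExp n k : R)) =
      Sum.elim (fun i : Fin n => 3 * (i : R)) fun i : Fin n => 3 * (i : R) + 1 := by
    ext (i | i) <;> simp [gapExp]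
  have scale : (Matrix.vandermonde fun i : Fin n => 3 * (i : R)).det =
      3 ^ n.choose 2 * (Matrix.vandermonde fun i : Fin n => (i : R)).det := by
    rw [← sum_fin_val_eq_choose]
    exact alternant_mul (fun i : Fin n => (i : ℕ)) 3 _
  rw [elim_eq, alternant_consecExp, Matrix.det_vandermonde_add, scale]
  ring

theorem alternant_consecExp_consecExp (n : ℕ) :
    alternant (consecExp n) (fun k => (consecExp n k : R)) =
      (Matrix.vandermonde fun i : Fin n => (i : R)).det ^ 2 *
        ∏ i : Fin n, ∏ j : Fin n, ((n : R) + j - i) := by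
  have elim_eq : (fun k => (consecExp n k : R)) =
      Sum.elim (fun i : Fin n => (i : R)) fun i : Fin n => (i : R) + n := by
    ext (i | i) <;> simp [consecExp, add_comm]
  rw [elim_eq, alternant_consecExp, Matrix.det_vandermonde_add]
  simp only [add_comm (n : R)]
  ring

end AlternantAtPowers

namespace SixVertex

section Specialization

variable {R : Type*} [CommRing R] {ω : R} {n : ℕ}

theorem injective_elim_X_pow (ne_zero : ω ≠ 0) (ne_one : ω ≠ 1) : Function.Injective
    (Sum.elim (fun i : Fin n => (X : R[X]) ^ (i : ℕ))
      (Sum.elim (fun i : Fin n => X ^ (n + i)) (C ω • fun i : Fin n => X ^ (n + i)))) := by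
  have : Nontrivial R := nontrivial_of_ne ω 1 ne_one
  have one_ne : (1 : R) ≠ 0 := one_ne_zero
  rintro (i | i | i) (j | j | j) h <;>
    simp only [Sum.elim_inl, Sum.elim_inr, Pi.smul_apply, smul_eq_mul, X_pow_eq_monomial,
      C_mul_monomial, monomial_eq_monomial_iff] at h <;>
    grind

theorem partitionFun_one_mul_alternant [IsDomain R] (hω : ω ^ 2 + ω + 1 = 0) (ne_one : ω ≠ 1)
    (n : ℕ) :
    partitionFun ω (1 : Fin n → R) 1 * alternant (consecExp n) (fun k => (consecExp n k : R)) =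
      (1 - ω) ^ n * ω ^ n.choose 2 * alternant (consecExp n) fun k => (gapExp n k : R) := by
  have ne_zero : ω ≠ 0 := by rintro rfl; simp at hω
  have hCω : (C ω) ^ 2 + C ω + 1 = 0 := by
    simpa only [map_add, map_pow, map_one, map_zero] using congrArg C hω
  have elim_eq : Sum.elim (fun i : Fin n => (X : R[X]) ^ (i : ℕ)) (fun i : Fin n => X ^ (n + i)) =
      fun k => X ^ consecExp n k := by
    ext1 (i | i) <;> rfl
  have h := partitionFun_mul_alternant hCω (injective_elim_X_pow (n := n) ne_zero ne_one)
  rw [elim_eq, alternant_pow_comm (gapExp n), alternant_consecExp_X_pow,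
    alternant_consecExp_X_pow] at h
  have eval_partitionFun : (partitionFun (C ω) (fun i : Fin n => (X : R[X]) ^ (i : ℕ))
      fun i => X ^ (n + i)).eval 1 = partitionFun ω (1 : Fin n → R) 1 := by
    rw [← coe_evalRingHom, map_partitionFun, coe_evalRingHom, eval_C]
    congr 1 <;> ext i <;> simp
  have cancelled := mul_left_cancel₀ (pow_ne_zero _ (X_sub_C_ne_zero (1 : R)))
    ((mul_left_comm ..).trans (h.trans (mul_left_comm ..)))
  simpa only [eval_mul, eval_pow, eval_sub, eval_one, eval_C, eval_partitionFun,
    eval_one_alternant_geom_sum] using congrArg (eval 1) cancelled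

theorem mul_prod_eq_of_partitionFun_one [IsDomain R] [CharZero R] (hω : ω ^ 2 + ω + 1 = 0) {N : R}
    (hN : partitionFun ω (1 : Fin n → R) 1 = (1 - ω) ^ (n * n) * N) :
    N * ∏ i : Fin n, ∏ j : Fin n, ((n : R) + j - i) =
      (-3) ^ n.choose 2 * ∏ i : Fin n, ∏ j : Fin n, (3 * (j : R) + 1 - 3 * i) := by
  have ne_zero : ω ≠ 0 := by rintro rfl; simp at hω
  have ne_one : ω ≠ 1 := by rintro rfl; norm_num at hω
  have vandermonde_ne_zero : (Matrix.vandermonde fun i : Fin n => (i : R)).det ≠ 0 :=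
    Matrix.det_vandermonde_ne_zero_iff.2 fun i j h => Fin.ext (Nat.cast_injective h)
  have one_sub_pow : (1 - ω) ^ (n * n) = (1 - ω) ^ n * (-3 * ω) ^ n.choose 2 := by
    have sq : (1 - ω) ^ 2 = -3 * ω := by linear_combination hω
    have : n * n = n + 2 * n.choose 2 := by
      rw [Nat.choose_two_right, Nat.mul_div_cancel' (Nat.even_mul_pred_self n).two_dvd,
        Nat.mul_sub_one, Nat.add_sub_cancel' (Nat.le_mul_self n)]
    rw [this, pow_add, pow_mul, sq]
  have h := partitionFun_one_mul_alternant hω ne_one n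
  rw [alternant_consecExp_consecExp, alternant_consecExp_gapExp, hN, one_sub_pow] at h
  have factor_ne_zero : (1 - ω) ^ n * (-3 * ω) ^ n.choose 2 *
      (Matrix.vandermonde fun i : Fin n => (i : R)).det ^ 2 ≠ 0 := by
    simp [sub_ne_zero.2 ne_one.symm, ne_zero, vandermonde_ne_zero]
  have three_pow : (3 : R) ^ (2 * n.choose 2) = (-3) ^ n.choose 2 * (-3) ^ n.choose 2 := by
    rw [pow_mul, ← mul_pow]
    norm_num
  refine mul_left_cancel₀ factor_ne_zero ?_
  rw [three_pow, mul_pow] at h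
  linear_combination h

end Specialization

end SixVertex

section Factorials

open Finset

variable {R : Type*} [CommRing R]

theorem prod_range_natCast_sub {M : Type*} [CommMonoid M] (f : R → M) (n : ℕ) :
    ∏ i ∈ range n, f (n - i) = ∏ k ∈ range n, f (k + 1) := by
  induction n with
  | zero => rfl
  | succ n ih =>
    rw [prod_range_succ', prod_range_succ (fun k : ℕ => f (k + 1)), ← ih]
    simp only [Nat.cast_add, Nat.cast_one, Nat.cast_zero, sub_zero, add_sub_add_right_eq_sub]

theorem prod_add_sub_mul_factorial (n j : ℕ) :
    (∏ i ∈ range n, ((n : R) + j - i)) * j.factorial = (n + j).factorial := by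
  induction n with
  | zero => simp
  | succ n ih =>
    have shift (i : ℕ) : ((n + 1 : ℕ) : R) + j - (i + 1 : ℕ) = n + j - i := by push_cast; ring
    rw [prod_range_succ', mul_right_comm]
    simp only [shift, ih]
    rw [add_right_comm, Nat.factorial_succ]
    push_cast
    ring

theorem factorial_three_mul_add_one (n : ℕ) : (3 * n + 1).factorial =
    3 ^ n * n.factorial * ∏ k ∈ range n, ((3 * k + 4) * (3 * k + 2)) := by
  induction n with
  | zero => rfl
  | succ n ih =>
    rw [prod_range_succ, show 3 * (n + 1) + 1 = 3 * n + 1 + 1 + 1 + 1 by ring]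
    rw [Nat.factorial_succ, Nat.factorial_succ, Nat.factorial_succ, ih, Nat.factorial_succ]
    ring

theorem prod_three_mul_add_one_sub_mul_prod_factorial (n : ℕ) :
    (-3) ^ n.choose 2 * (∏ i ∈ range n, ∏ j ∈ range n, (3 * (j : R) + 1 - 3 * i)) *
      ∏ j ∈ range n, (j.factorial : R) = ∏ j ∈ range n, ((3 * j + 1).factorial : R) := by
  induction n with
  | zero => simp
  | succ n ih =>
    have last_row : ∏ j ∈ range n, (3 * (j : R) + 1 - 3 * n) =
        (-1) ^ n * ∏ k ∈ range n, (3 * (k : R) + 2) := by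
      calc ∏ j ∈ range n, (3 * (j : R) + 1 - 3 * n)
        _ = ∏ j ∈ range n, (1 - 3 * ((n : R) - j)) := prod_congr rfl fun _ _ => by ring
        _ = ∏ k ∈ range n, -(3 * (k : R) + 2) := by
          rw [prod_range_natCast_sub fun u : R => 1 - 3 * u]
          exact prod_congr rfl fun _ _ => by ring
        _ = (-1) ^ n * ∏ k ∈ range n, (3 * (k : R) + 2) := by rw [prod_neg, card_range]
    have last_column : ∏ i ∈ range n, (3 * (n : R) + 1 - 3 * i) =
        ∏ k ∈ range n, (3 * (k : R) + 4) := by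
      convert prod_range_natCast_sub (fun u : R => 3 * u + 1) n using 1 <;>
        exact prod_congr rfl fun _ _ => by ring
    have sign : ((-3 : R)) ^ n * (-1) ^ n = 3 ^ n := by rw [← mul_pow]; norm_num
    rw [prod_range_succ (fun j => ((3 * j + 1).factorial : R)), ← ih, factorial_three_mul_add_one n,
      Nat.choose_succ_succ' n 1, Nat.choose_one_right, pow_add]
    simp only [prod_range_succ _ n, prod_mul_distrib, last_row, last_column]
    push_cast
    rw [← sign]
    ring

end Factorials

namespace SixVertex

theorem mul_prod_factorial_of_partitionFun_one {R : Type*} [CommRing R] [IsDomain R] [CharZero R]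
    {ω : R} (hω : ω ^ 2 + ω + 1 = 0) {n : ℕ} {N : R}
    (hN : partitionFun ω (1 : Fin n → R) 1 = (1 - ω) ^ (n * n) * N) :
    N * ∏ j ∈ Finset.range n, ((n + j).factorial : R) =
      ∏ j ∈ Finset.range n, ((3 * j + 1).factorial : R) := by
  have key : N * ∏ i ∈ Finset.range n, ∏ j ∈ Finset.range n, ((n : R) + j - i) =
      (-3) ^ n.choose 2 *
        ∏ i ∈ Finset.range n, ∏ j ∈ Finset.range n, (3 * (j : R) + 1 - 3 * i) := by
    simpa only [Finset.prod_range] using mul_prod_eq_of_partitionFun_one hω hN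
  rw [← prod_three_mul_add_one_sub_mul_prod_factorial, ← key, mul_assoc, Finset.prod_comm,
    ← Finset.prod_mul_distrib]
  simp only [prod_add_sub_mul_factorial]

end SixVertex

/-! ### Counting domain wall configurations -/

section BooleMatrix

variable {R α : Type*} [Semiring R] [Fintype α] [DecidableEq α]

theorem of_boole_pow_apply (r : α → α → Prop) (m : ℕ) (a b : α) :
    ((Matrix.of fun a b => if r a b then (1 : R) else 0) ^ m) a b =
      Nat.card {s : Fin (m + 1) → α //
        s 0 = a ∧ s (Fin.last m) = b ∧ ∀ j : Fin m, r (s j.castSucc) (s j.succ)} := by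
  simp only [Nat.card_eq_fintype_card, Fintype.card_subtype, ← Finset.sum_boole]
  induction m generalizing a with
  | zero =>
    rw [← (Equiv.funUnique (Fin 1) α).symm.sum_comp]
    simp [ite_and, Matrix.one_apply]
  | succ m ih =>
    have cons_iff (k : α) (s : Fin (m + 1) → α) :
        ((Fin.cons k s : Fin (m + 2) → α) 0 = a ∧
          (Fin.cons k s : Fin (m + 2) → α) (Fin.last (m + 1)) = b ∧ ∀ j : Fin (m + 1),
            r ((Fin.cons k s : Fin (m + 2) → α) j.castSucc)
              ((Fin.cons k s : Fin (m + 2) → α) j.succ)) ↔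
        k = a ∧ r a (s 0) ∧ s (Fin.last m) = b ∧ ∀ j : Fin m, r (s j.castSucc) (s j.succ) := by
      simp only [Fin.forall_fin_succ, ← Fin.succ_last, Fin.cons_succ, Fin.cons_zero,
        Fin.castSucc_zero, ← Fin.succ_castSucc]
      grind
    rw [pow_succ', Matrix.mul_apply, ← (Fin.consEquiv fun _ : Fin (m + 2) => α).sum_comp,
      Fintype.sum_prod_type]
    simp only [ih, Matrix.of_apply, Fin.consEquiv_apply, cons_iff, ite_and, Finset.mul_sum]
    rw [Finset.sum_comm, Finset.sum_comm (s := Finset.univ (α := α))]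
    refine Finset.sum_congr rfl fun s _ => ?_
    simp only [mul_ite, mul_one, mul_zero, Finset.sum_ite_eq, Finset.sum_ite_eq',
      Finset.mem_univ, if_true]
    split_ifs <;> rfl

end BooleMatrix

namespace SixVertex

section Counting

variable {R : Type*} [CommRing R] {n : ℕ}

/-- The height function of a state: `height l i` is the number of `true` entries among the first
`i` entries of `l`. -/
def height (l : Fin n → Bool) : Fin (n + 1) → ℕ :=
  Fin.partialSum fun k => (l k).toNat

theorem height_zero (l : Fin n → Bool) : height l 0 = 0 :=
  Fin.partialSum_zero _

theorem height_succ (l : Fin n → Bool) (i : Fin n) :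
    height l i.succ = height l i.castSucc + (l i).toNat :=
  Fin.partialSum_succ _ i

theorem height_succ' (l : Fin (n + 1) → Bool) (i : Fin (n + 1)) :
    height l i.succ = (l 0).toNat + height (Fin.tail l) i :=
  Fin.partialSum_succ' _ i

/-- The states `l` and `r` can be the left and right states of a column with top state `t` and
bottom state `b`: the state of the vertical edge below the first `i` vertices is then
`t.toNat + height r i - height l i`. -/
def Interlace (t b : Bool) (l r : Fin n → Bool) : Prop :=
  (∀ i, height l i ≤ t.toNat + height r i ∧ t.toNat + height r i ≤ height l i + 1) ∧
    t.toNat + height r (Fin.last n) = height l (Fin.last n) + b.toNat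

theorem interlace_succ_iff (t b : Bool) (l r : Fin (n + 1) → Bool) :
    Interlace t b l r ↔ ∃ m : Bool, (l 0).toNat + m.toNat = (r 0).toNat + t.toNat ∧
      Interlace m b (Fin.tail l) (Fin.tail r) := by
  have ht := t.toNat_le
  simp only [Interlace, Fin.forall_fin_succ (n := n + 1), ← Fin.succ_last,
    height_succ', height_zero]
  constructor
  · rintro ⟨⟨-, h⟩, hlast⟩
    obtain ⟨m, hm⟩ : ∃ m : Bool, (l 0).toNat + m.toNat = (r 0).toNat + t.toNat := by
      have := h 0
      simp only [height_zero] at this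
      revert this
      cases l 0 <;> cases r 0 <;> cases t <;> simp
    refine ⟨m, hm, fun i => ?_, by lia⟩
    have := h i
    lia
  · rintro ⟨m, hm, h, hlast⟩
    refine ⟨⟨by lia, fun i => ?_⟩, by lia⟩
    have := h i
    lia

theorem weight_one (ω : R) (l t r b : Bool) :
    weight ω 1 1 l t r b = if l.toNat + b.toNat = r.toNat + t.toNat then 1 - ω else 0 := by
  cases l <;> cases t <;> cases r <;> cases b <;> simp [weight]

theorem column_one (ω : R) (t b : Bool) (l r : Fin n → Bool) :
    column ω n 1 1 t b l r = if Interlace t b l r then (1 - ω) ^ n else 0 := by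
  induction n generalizing t with
  | zero =>
    rw [column_zero_apply, pow_zero]
    refine if_congr ?_ rfl rfl
    cases t <;> cases b <;> simp [Interlace, height_zero]
  | succ n ih =>
    have tail_one : Fin.tail (1 : Fin (n + 1) → R) = 1 := rfl
    rw [column_succ_apply, tail_one]
    simp only [ih, Pi.one_apply, weight_one, interlace_succ_iff t, Fintype.sum_bool,
      Bool.exists_bool]
    cases l 0 <;> cases r 0 <;> cases t <;> simp [pow_succ']

/-- The sequence `s` consists of the states between the columns of a configuration of the
`n × n` lattice with domain wall boundary conditions. -/
def IsDomainWall (s : Fin (n + 1) → Fin n → Bool) : Prop :=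
  (s 0 = fun _ => false) ∧ (s (Fin.last n) = fun _ => true) ∧
    ∀ j : Fin n, Interlace false true (s j.castSucc) (s j.succ)

theorem partitionFun_one (ω : R) :
    partitionFun ω (1 : Fin n → R) 1 =
      (1 - ω) ^ (n * n) * Nat.card {s : Fin (n + 1) → Fin n → Bool // IsDomainWall s} := by
  have creation_one : creation ω (1 : Fin n → R) 1 = (1 - ω) ^ n •
      Matrix.of fun l r => if Interlace false true l r then (1 : R) else 0 := by
    ext l r
    simp [creation, column_one]
  rw [partitionFun, latticeSum]
  simp only [Pi.one_apply, List.ofFn_const, List.prod_replicate, creation_one, _root_.smul_pow,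
    ← pow_mul, Matrix.smul_apply, smul_eq_mul, of_boole_pow_apply, IsDomainWall]

end Counting

end SixVertex

/-! ### Corner sums and order ideals -/

section CornerSum

variable {n : ℕ}

/-- A function on `{0, …, n}` all of whose increments are `0` or `1`. -/
def IsUnitStep (f : Fin (n + 1) → ℕ) : Prop :=
  ∀ i : Fin n, f i.castSucc ≤ f i.succ ∧ f i.succ ≤ f i.castSucc + 1

theorem IsUnitStep.le_add {f : Fin (n + 1) → ℕ} (hf : IsUnitStep f) (i : Fin (n + 1)) :
    f i ≤ f 0 + i := by
  induction i using Fin.induction with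
  | zero => simp
  | succ i ih =>
    have := hf i
    simp only [Fin.val_castSucc, Fin.val_succ] at *
    lia

theorem IsUnitStep.last_add_le {f : Fin (n + 1) → ℕ} (hf : IsUnitStep f) (i : Fin (n + 1)) :
    f (Fin.last n) + i ≤ f i + n := by
  induction i using Fin.reverseInduction with
  | last => simp
  | cast i ih =>
    have := hf i
    simp only [Fin.val_castSucc, Fin.val_succ] at *
    lia

/-- Corner sum matrices of alternating sign matrices of size `n`: the entry `C i j` is the sum of
the entries of the alternating sign matrix in its first `i` rows and first `j` columns. -/
structure IsCornerSum (C : Fin (n + 1) → Fin (n + 1) → ℕ) : Prop where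
  zero_left : ∀ j, C 0 j = 0
  zero_right : ∀ i, C i 0 = 0
  last_left : ∀ j, C (Fin.last n) j = j
  last_right : ∀ i, C i (Fin.last n) = i
  step_left : ∀ j, IsUnitStep fun i => C i j
  step_right : ∀ i, IsUnitStep (C i)

namespace IsCornerSum

variable {C : Fin (n + 1) → Fin (n + 1) → ℕ}

theorem le_min (hC : IsCornerSum C) (i j : Fin (n + 1)) : C i j ≤ min (i : ℕ) j := by
  have hi := (hC.step_left j).le_add i
  have hj := (hC.step_right i).le_add j
  rw [hC.zero_left] at hi
  rw [hC.zero_right] at hj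
  lia

theorem add_le (hC : IsCornerSum C) (i j : Fin (n + 1)) : (i : ℕ) + j ≤ n + C i j := by
  have := (hC.step_right i).last_add_le j
  rw [hC.last_right] at this
  lia

end IsCornerSum

end CornerSum

namespace SixVertex

variable {n : ℕ}

theorem isUnitStep_height (l : Fin n → Bool) : IsUnitStep (height l) := fun i => by
  have := (l i).toNat_le
  rw [height_succ]
  lia

theorem height_injective : Function.Injective (height (n := n)) := fun l l' h => by
  funext i
  have toNat_eq : (l i).toNat = (l' i).toNat :=
    Nat.add_left_cancel (n := height l i.castSucc) (by rw [← height_succ, h, height_succ])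
  revert toNat_eq
  cases l i <;> cases l' i <;> simp

theorem exists_height_eq {f : Fin (n + 1) → ℕ} (h0 : f 0 = 0) (hf : IsUnitStep f) :
    ∃ l, height l = f := by
  refine ⟨fun i => decide (f i.castSucc < f i.succ), funext fun i => ?_⟩
  induction i using Fin.induction with
  | zero => rw [height_zero, h0]
  | succ i ih =>
    have := hf i
    rw [height_succ, ih]
    by_cases h : f i.castSucc < f i.succ <;>
      simp only [h, decide_true, decide_false, Bool.toNat_true, Bool.toNat_false] <;> lia

theorem eq_false_iff_height (l : Fin n → Bool) : (l = fun _ => false) ↔ ∀ i, height l i = 0 := by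
  have height_false : height (fun _ : Fin n => false) = fun _ => 0 := by
    funext i
    simp [height, Fin.partialSum]
  rw [← height_injective.eq_iff, height_false, funext_iff]

theorem eq_true_iff_height (l : Fin n → Bool) : (l = fun _ => true) ↔ ∀ i, height l i = i := by
  have height_true : height (fun _ : Fin n => true) = fun i => i.val := by
    funext i
    induction i using Fin.induction with
    | zero => rfl
    | succ i ih => rw [height_succ, ih]; rfl
  rw [← height_injective.eq_iff, height_true, funext_iff]

theorem isCornerSum_height_iff {s : Fin (n + 1) → Fin n → Bool} :
    IsCornerSum (fun j => height (s j)) ↔ IsDomainWall s := by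
  simp only [IsDomainWall, eq_false_iff_height, eq_true_iff_height, Interlace, Bool.toNat_false,
    Bool.toNat_true, zero_add]
  constructor
  · intro h
    refine ⟨h.zero_left, h.last_left, fun j => ⟨fun i => h.step_left i j, ?_⟩⟩
    rw [h.last_right, h.last_right, Fin.val_succ, Fin.val_castSucc]
  · rintro ⟨hfirst, hlast, h⟩
    refine ⟨hfirst, fun j => height_zero _, hlast, fun j => ?_, fun i j => (h j).1 i,
      fun j => isUnitStep_height _⟩
    induction j using Fin.induction with
    | zero => rw [hfirst, Fin.val_zero]
    | succ j ih => rw [(h j).2, ih, Fin.val_succ, Fin.val_castSucc]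

theorem bijOn_isDomainWall_isCornerSum :
    Set.BijOn (fun (s : Fin (n + 1) → Fin n → Bool) j => height (s j))
      {s | IsDomainWall s} {C | IsCornerSum C} := by
  refine ⟨fun s => isCornerSum_height_iff.2, height_injective.comp_left.injOn, fun C hC => ?_⟩
  choose s hs using fun j => exists_height_eq (hC.zero_right j) (hC.step_right j)
  obtain rfl : (fun j => height (s j)) = C := funext hs
  exact ⟨s, isCornerSum_height_iff.1 hC, rfl⟩

end SixVertex

section OrderIdeal

variable {n : ℕ} {I : Finset (ℤ × ℤ × ℤ)} {C : Fin (n + 1) → Fin (n + 1) → ℕ}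

theorem isIdeal3_iff {S : Set (ℤ × ℤ × ℤ)} {W : Finset (ℤ × ℤ × ℤ)} :
    IsIdeal3 S W I ↔ I ⊆ W ∧ ∀ u ∈ W, ∀ e ∈ S, u + e ∈ I → u ∈ I := by
  refine and_congr_right fun hIW => ⟨fun h u hu e he hue => ?_, fun h u v huv hv => ?_⟩
  · exact h u (u + e) ⟨hu, hIW hue, .single ⟨hu, hIW hue, e, he, rfl⟩⟩ hue
  · refine huv.2.2.head_induction_on (motive := fun w _ => w ∈ I) hv ?_
    rintro u w ⟨hu, -, e, he, rfl⟩ - hw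
    exact h u hu e he hw

theorem mem_V3 {a b c : ℤ} :
    (a, b, c) ∈ V3 n ↔ 0 ≤ a ∧ 0 ≤ b ∧ 0 ≤ c ∧ a + b + c + 2 ≤ n := by
  simp only [V3, Finset.mem_filter, Finset.mem_product, Finset.mem_Icc]
  lia

/-- The point at level `a` over the position `(i, j)`. The points of `V3 n` over a fixed position
form a chain of `T_n({b, y, o, g})`, in which the level decreases. -/
def chainPoint (i j a : ℕ) : ℤ × ℤ × ℤ := (a, i - 1 - a, j - 1 - a)

theorem chainPoint_mem_V3 {i j a : ℕ} :
    chainPoint i j a ∈ V3 n ↔ i + j ≤ n + a ∧ a < i ∧ a < j := by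
  rw [chainPoint, mem_V3]
  lia

theorem chainPoint_inj {i j a i' j' a' : ℕ} :
    chainPoint i j a = chainPoint i' j' a' ↔ i = i' ∧ j = j' ∧ a = a' := by
  simp only [chainPoint, Prod.mk.injEq]
  lia

theorem exists_chainPoint_eq {p : ℤ × ℤ × ℤ} (hp : p ∈ V3 n) :
    ∃ i j : Fin (n + 1), ∃ a : ℕ, p = chainPoint i j a := by
  obtain ⟨a, b, c⟩ := p
  rw [mem_V3] at hp
  refine ⟨⟨(1 + a + b).toNat, by lia⟩, ⟨(1 + a + c).toNat, by lia⟩, a.toNat, ?_⟩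
  simp only [chainPoint, Prod.mk.injEq]
  lia

theorem isIdeal3_iff_chainPoint :
    IsIdeal3 {vb, vy, vo, vg} (V3 n) I ↔ I ⊆ V3 n ∧
      (∀ i j a, chainPoint i j a ∈ V3 n → chainPoint (i + 1) j a ∈ I → chainPoint i j a ∈ I) ∧
      (∀ i j a, chainPoint i j a ∈ V3 n → chainPoint i (j + 1) a ∈ I → chainPoint i j a ∈ I) ∧
      (∀ i j a, chainPoint (i + 1) j (a + 1) ∈ V3 n → chainPoint i j a ∈ I →
        chainPoint (i + 1) j (a + 1) ∈ I) ∧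
      ∀ i j a, chainPoint i (j + 1) (a + 1) ∈ V3 n → chainPoint i j a ∈ I →
        chainPoint i (j + 1) (a + 1) ∈ I := by
  have add_vg (i j a) : chainPoint i j a + vg = chainPoint (i + 1) j a := by
    simp only [chainPoint, vg, Prod.mk_add_mk, Prod.mk.injEq]; lia
  have add_vy (i j a) : chainPoint i j a + vy = chainPoint i (j + 1) a := by
    simp only [chainPoint, vy, Prod.mk_add_mk, Prod.mk.injEq]; lia
  have add_vo (i j a) : chainPoint (i + 1) j (a + 1) + vo = chainPoint i j a := by
    simp only [chainPoint, vo, Prod.mk_add_mk, Prod.mk.injEq]; lia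
  have add_vb (i j a) : chainPoint i (j + 1) (a + 1) + vb = chainPoint i j a := by
    simp only [chainPoint, vb, Prod.mk_add_mk, Prod.mk.injEq]; lia
  rw [isIdeal3_iff]
  refine and_congr_right fun hI => ⟨fun h => ⟨fun i j a hV hmem => ?_, fun i j a hV hmem => ?_,
    fun i j a hV hmem => ?_, fun i j a hV hmem => ?_⟩, fun ⟨hg, hy, ho, hb⟩ u hu e he hue => ?_⟩
  · exact h _ hV vg (by simp) (by rwa [add_vg])
  · exact h _ hV vy (by simp) (by rwa [add_vy])
  · exact h _ hV vo (by simp) (by rwa [add_vo])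
  · exact h _ hV vb (by simp) (by rwa [add_vb])
  · obtain ⟨⟨i, hi⟩, ⟨j, hj⟩, a, rfl⟩ := exists_chainPoint_eq hu
    have pos := chainPoint_mem_V3.1 hu
    obtain ⟨i, rfl⟩ := Nat.exists_eq_add_of_lt pos.2.1
    obtain ⟨j, rfl⟩ := Nat.exists_eq_add_of_lt pos.2.2
    have hueV := hI hue
    rcases he with rfl | rfl | rfl | rfl
    · rcases a with _ | a
      · simp [chainPoint, vb, mem_V3] at hueV
      · exact hb _ _ _ hu (by rwa [← add_vb])
    · exact hy _ _ _ hu (by rwa [← add_vy])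
    · rcases a with _ | a
      · simp [chainPoint, vo, mem_V3] at hueV
      · exact ho _ _ _ hu (by rwa [← add_vo])
    · exact hg _ _ _ hu (by rwa [← add_vg])

/-- The order ideal of `T_n({b, y, o, g})` attached to a corner sum matrix `C`: it contains the
points over `(i, j)` of level at least `C i j`. -/
noncomputable def cornerIdeal (C : Fin (n + 1) → Fin (n + 1) → ℕ) : Finset (ℤ × ℤ × ℤ) :=
  (V3 n).filter fun p => ∃ i j : Fin (n + 1), ∃ a : ℕ, p = chainPoint i j a ∧ C i j ≤ a

theorem chainPoint_mem_cornerIdeal {i j a : ℕ} :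
    chainPoint i j a ∈ cornerIdeal C ↔ chainPoint i j a ∈ V3 n ∧
      ∃ (hi : i < n + 1) (hj : j < n + 1), C ⟨i, hi⟩ ⟨j, hj⟩ ≤ a := by
  simp only [cornerIdeal, Finset.mem_filter, chainPoint_inj]
  refine and_congr_right fun _ =>
    ⟨?_, fun ⟨hi, hj, h⟩ => ⟨⟨i, hi⟩, ⟨j, hj⟩, a, ⟨rfl, rfl, rfl⟩, h⟩⟩
  rintro ⟨i', j', a', ⟨rfl, rfl, rfl⟩, h⟩
  exact ⟨i'.2, j'.2, h⟩

theorem IsCornerSum.isIdeal3_cornerIdeal (hC : IsCornerSum C) :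
    IsIdeal3 {vb, vy, vo, vg} (V3 n) (cornerIdeal C) := by
  simp only [isIdeal3_iff_chainPoint, chainPoint_mem_cornerIdeal]
  refine ⟨Finset.filter_subset _ _, fun i j a hV ⟨_, hi, hj, h⟩ => ⟨hV, by lia, hj, ?_⟩,
    fun i j a hV ⟨_, hi, hj, h⟩ => ⟨hV, hi, by lia, ?_⟩,
    fun i j a hV ⟨_, hi, hj, h⟩ => ?_, fun i j a hV ⟨_, hi, hj, h⟩ => ?_⟩
  · exact (hC.step_left ⟨j, hj⟩ ⟨i, by lia⟩).1.trans h
  · exact (hC.step_right ⟨i, hi⟩ ⟨j, by lia⟩).1.trans h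
  · have := chainPoint_mem_V3.1 hV
    exact ⟨hV, by lia, hj, (hC.step_left ⟨j, hj⟩ ⟨i, by lia⟩).2.trans (Nat.succ_le_succ h)⟩
  · have := chainPoint_mem_V3.1 hV
    exact ⟨hV, hi, by lia, (hC.step_right ⟨i, hi⟩ ⟨j, by lia⟩).2.trans (Nat.succ_le_succ h)⟩

theorem IsCornerSum.le_iff (hC : IsCornerSum C) {i j : Fin (n + 1)} {a : ℕ} :
    C i j ≤ a ↔ min (i : ℕ) j ≤ a ∨ chainPoint i j a ∈ cornerIdeal C := by
  have le_min := hC.le_min i j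
  have add_le := hC.add_le i j
  simp only [chainPoint_mem_cornerIdeal, chainPoint_mem_V3, Fin.eta, Fin.is_lt, exists_true_left]
  lia

/-- The corner sum matrix of an order ideal `I`: the least level of the points of `I` over `(i, j)`,
with the default value `min i j` when there are none. -/
noncomputable def threshold (I : Finset (ℤ × ℤ × ℤ)) (i j : ℕ) : ℕ :=
  Nat.find (p := fun a => min i j ≤ a ∨ chainPoint i j a ∈ I) ⟨min i j, .inl le_rfl⟩

namespace IsIdeal3

theorem threshold_le_iff (hI : IsIdeal3 {vb, vy, vo, vg} (V3 n) I) {i j a : ℕ} :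
    threshold I i j ≤ a ↔ min i j ≤ a ∨ chainPoint i j a ∈ I := by
  obtain ⟨hIV, -, hy, -, hb⟩ := isIdeal3_iff_chainPoint.1 hI
  have mono {a : ℕ} (h : min i j ≤ a ∨ chainPoint i j a ∈ I) :
      min i j ≤ a + 1 ∨ chainPoint i j (a + 1) ∈ I := by
    refine or_iff_not_imp_left.2 fun hmin => ?_
    have hmem := h.resolve_left (by lia)
    have := chainPoint_mem_V3.1 (hIV hmem)
    exact hy _ _ _ (chainPoint_mem_V3.2 (by lia)) (hb _ _ _ (chainPoint_mem_V3.2 (by lia)) hmem)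
  rw [threshold, Nat.find_le_iff]
  exact ⟨fun ⟨b, hba, hb⟩ => Nat.le_induction hb (fun _ _ => mono) a hba, fun h => ⟨a, le_rfl, h⟩⟩

theorem threshold_le_min (hI : IsIdeal3 {vb, vy, vo, vg} (V3 n) I) (i j : ℕ) :
    threshold I i j ≤ min i j :=
  hI.threshold_le_iff.2 (.inl le_rfl)

theorem add_le_threshold (hI : IsIdeal3 {vb, vy, vo, vg} (V3 n) I) {i j : ℕ} (hi : i ≤ n)
    (hj : j ≤ n) : i + j ≤ n + threshold I i j := by
  rcases hI.threshold_le_iff.1 (le_refl (threshold I i j)) with h | h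
  · lia
  · exact (chainPoint_mem_V3.1 (hI.1 h)).1

theorem threshold_succ_left (hI : IsIdeal3 {vb, vy, vo, vg} (V3 n) I) (i j : ℕ) :
    threshold I i j ≤ threshold I (i + 1) j ∧ threshold I (i + 1) j ≤ threshold I i j + 1 := by
  obtain ⟨hIV, hg, -, ho, -⟩ := isIdeal3_iff_chainPoint.1 hI
  constructor <;> refine hI.threshold_le_iff.2 (or_iff_not_imp_left.2 fun hmin => ?_)
  · have hmem := (hI.threshold_le_iff.1 (le_refl (threshold I (i + 1) j))).resolve_left (by lia)
    have := chainPoint_mem_V3.1 (hIV hmem)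
    exact hg _ _ _ (chainPoint_mem_V3.2 (by lia)) hmem
  · have hmem := (hI.threshold_le_iff.1 (le_refl (threshold I i j))).resolve_left (by lia)
    have := chainPoint_mem_V3.1 (hIV hmem)
    exact ho _ _ _ (chainPoint_mem_V3.2 (by lia)) hmem

theorem threshold_succ_right (hI : IsIdeal3 {vb, vy, vo, vg} (V3 n) I) (i j : ℕ) :
    threshold I i j ≤ threshold I i (j + 1) ∧ threshold I i (j + 1) ≤ threshold I i j + 1 := by
  obtain ⟨hIV, -, hy, -, hb⟩ := isIdeal3_iff_chainPoint.1 hI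
  constructor <;> refine hI.threshold_le_iff.2 (or_iff_not_imp_left.2 fun hmin => ?_)
  · have hmem := (hI.threshold_le_iff.1 (le_refl (threshold I i (j + 1)))).resolve_left (by lia)
    have := chainPoint_mem_V3.1 (hIV hmem)
    exact hy _ _ _ (chainPoint_mem_V3.2 (by lia)) hmem
  · have hmem := (hI.threshold_le_iff.1 (le_refl (threshold I i j))).resolve_left (by lia)
    have := chainPoint_mem_V3.1 (hIV hmem)
    exact hb _ _ _ (chainPoint_mem_V3.2 (by lia)) hmem

theorem isCornerSum_threshold (hI : IsIdeal3 {vb, vy, vo, vg} (V3 n) I) :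
    IsCornerSum fun i j : Fin (n + 1) => threshold I i j where
  zero_left j := by simpa using hI.threshold_le_min 0 j
  zero_right i := by simpa using hI.threshold_le_min i 0
  last_left j := by
    have := hI.threshold_le_min n j
    have := hI.add_le_threshold le_rfl j.is_le
    rw [Fin.val_last]
    lia
  last_right i := by
    have := hI.threshold_le_min i n
    have := hI.add_le_threshold i.is_le le_rfl
    rw [Fin.val_last]
    lia
  step_left j i := hI.threshold_succ_left i j
  step_right i j := hI.threshold_succ_right i j

end IsIdeal3

theorem bijOn_isCornerSum_isIdeal3 :
    Set.BijOn (cornerIdeal (n := n)) {C | IsCornerSum C}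
      {I | IsIdeal3 {vb, vy, vo, vg} (V3 n) I} := by
  refine Set.InvOn.bijOn (f' := fun I i j => threshold I i j) ⟨fun C hC => ?_, fun I hI => ?_⟩
    (fun C hC => hC.isIdeal3_cornerIdeal) fun I hI => hI.isCornerSum_threshold
  · funext i j
    refine eq_of_forall_ge_iff fun a => ?_
    rw [hC.isIdeal3_cornerIdeal.threshold_le_iff, ← hC.le_iff]
  · ext p
    by_cases hp : p ∈ V3 n
    · obtain ⟨i, j, a, rfl⟩ := exists_chainPoint_eq hp
      have := chainPoint_mem_V3.1 hp
      simp only [chainPoint_mem_cornerIdeal, hp, Fin.is_lt, exists_true_left, true_and,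
        IsIdeal3.threshold_le_iff hI]
      exact or_iff_right (by lia)
    · exact iff_of_false (fun h => hp (Finset.filter_subset _ _ h)) fun h => hp (hI.1 h)

theorem natCard_isDomainWall :
    Nat.card {s : Fin (n + 1) → Fin n → Bool // SixVertex.IsDomainWall s} =
      (ideals3 {vb, vy, vo, vg} (V3 n)).card := by
  have coe_ideals3 : {I | IsIdeal3 {vb, vy, vo, vg} (V3 n) I} =
      (ideals3 {vb, vy, vo, vg} (V3 n) : Set (Finset (ℤ × ℤ × ℤ))) := by
    ext I
    simpa [ideals3] using fun h : IsIdeal3 _ _ _ => h.1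
  have bij := bijOn_isCornerSum_isIdeal3.comp (SixVertex.bijOn_isDomainWall_isCornerSum (n := n))
  rw [coe_ideals3] at bij
  rw [← Set.ncard_coe_finset, ← bij.image_eq, bij.injOn.ncard_image]
  rfl

end OrderIdeal

/-- The number of order ideals of `T_n({b,y,o,g})` is given by the ASM product formula:
`|J| · ∏_{j=0}^{n-1} (n+j)! = ∏_{j=0}^{n-1} (3j+1)!`. -/
theorem stmt10 (n : ℕ) (hn : 1 ≤ n) :
    (ideals3 {vb, vy, vo, vg} (V3 n)).card * ∏ j ∈ Finset.range n, Nat.factorial (n + j) =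
      ∏ j ∈ Finset.range n, Nat.factorial (3 * j + 1) := by
  obtain ⟨ω, hω⟩ : ∃ ω : ℂ, ω ^ 2 + ω + 1 = 0 := by
    have h := (Complex.isPrimitiveRoot_exp 3 (by norm_num)).geom_sum_eq_zero (by norm_num)
    simp only [Finset.sum_range_succ, Finset.sum_range_zero, zero_add, pow_zero, pow_one] at h
    exact ⟨_, by linear_combination h⟩
  have partitionFun_eq := SixVertex.partitionFun_one (n := n) ω
  rw [natCard_isDomainWall] at partitionFun_eq
  exact_mod_cast SixVertex.mul_prod_factorial_of_partitionFun_one hω partitionFun_eq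
end

section
/- For every integer n ≥ 1, the following identity holds in the polynomial ring ℤ[λ, x_1, …, x_n]: ∏_{1 ≤ i < j ≤ n} (x_i + λ x_j) = Σ_{α ∈ MT_n} λ^{E(α)} (1+λ)^{N(α)} ∏_{k=1}^{n} x_k^{C_k(α)−1}, where the sum is over all ASM arrays (rotated monotone triangles) α of order n. -/
open scoped Classical

/-- An ASM array (rotated monotone triangle) of order `n`: rows `i = 1,…,n`, row `i`
having columns `j = 0,…,n-i`, with `α i 0 = i`, `i ≤ α i j ≤ i+j`, weakly increasing
rows, strictly increasing columns, and `α i j ≤ α (i+1) (j-1)` for `j ≥ 1`.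
Entries outside the staircase domain are normalized to `0`. -/
def IsMT (n : ℕ) (α : ℕ → ℕ → ℕ) : Prop :=
  (∀ i j, ¬(1 ≤ i ∧ i ≤ n ∧ j ≤ n - i) → α i j = 0) ∧
  (∀ i, 1 ≤ i → i ≤ n → α i 0 = i) ∧
  (∀ i j, 1 ≤ i → i ≤ n → j ≤ n - i → i ≤ α i j ∧ α i j ≤ i + j) ∧
  (∀ i j, 1 ≤ i → i ≤ n → j + 1 ≤ n - i → α i j ≤ α i (j + 1)) ∧
  (∀ i j, 1 ≤ i → i + 1 ≤ n → j ≤ n - (i + 1) → α i j < α (i + 1) j) ∧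
  (∀ i j, 1 ≤ i → i + 1 ≤ n → 1 ≤ j → j ≤ n - i → α i j ≤ α (i + 1) (j - 1))

/-- `E(α)`: the number of entries (with `j ≥ 1`) equal to their southwest diagonal
neighbor. -/
def Ecnt (n : ℕ) (α : ℕ → ℕ → ℕ) : ℕ :=
  ((Finset.Icc 1 n ×ˢ Finset.Icc 1 n).filter
    (fun p => p.2 ≤ n - p.1 ∧ α p.1 p.2 = α (p.1 + 1) (p.2 - 1))).card

/-- `N(α)`: the number of entries (with `j ≥ 1`) strictly greater than their west
neighbor and strictly less than their southwest diagonal neighbor (this is the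
number of `-1` entries of the corresponding ASM). -/
def Ncnt (n : ℕ) (α : ℕ → ℕ → ℕ) : ℕ :=
  ((Finset.Icc 1 n ×ˢ Finset.Icc 1 n).filter
    (fun p => p.2 ≤ n - p.1 ∧ α p.1 (p.2 - 1) < α p.1 p.2 ∧
      α p.1 p.2 < α (p.1 + 1) (p.2 - 1))).card

/-- `C_k(α)`: the total number of entries of `α` (column 0 included) equal to `k`. -/
def Ccnt (n : ℕ) (α : ℕ → ℕ → ℕ) (k : ℕ) : ℕ :=
  ((Finset.Icc 1 n ×ˢ Finset.range (n + 1)).filter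
    (fun p => p.2 ≤ n - p.1 ∧ α p.1 p.2 = k)).card
/-!
The product is a determinant. For `a < a'` the power series
`f_a = ∏_{c < a} (1 + x_c X) / ∏_{c ≤ a} (1 - λ x_c X)` satisfies
`f_{a'} - f_a = X ∑_{a ≤ c ≤ a'} w(a, c, a') f_c`, where `w(a, c, a')` is exactly the contribution
to the sum over arrays of an entry `c` with west neighbour `a` and southwest neighbour `a'`. Let
`D(a_1, …, a_m)` be the determinant of the first `m` coefficients of `f_{a_1}, …, f_{a_m}`.
Subtracting each row from the next and expanding along the first column, `D(a)` becomes the weighted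
sum of `D(b)` over the sequences `b` interlacing `a`, those that are not strictly increasing
vanishing because they give two equal rows. Iterating, `D(a)` is the sum over all monotone triangles
with first column `a`. When `a` consists of consecutive integers, the same row reduction, applied to
series whose denominators have more factors than their numerators, evaluates `D(a)` in product form.
-/

section EntryWeight

variable {R : Type*} [CommSemiring R] (x : ℕ → R) (L : R)

/-- The contribution to the generating function of an array entry `c` with west neighbour `a` and
southwest neighbour `a'`. -/
def entryWeight (a c a' : ℕ) : R :=
  (if c = a' then L else 1) * (if a < c ∧ c < a' then 1 + L else 1) * x c

theorem entryWeight_eq_add {a c a' : ℕ} (haa' : a < a') (hac : a ≤ c) (hca' : c ≤ a') :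
    entryWeight x L a c a' = (if c < a' then x c else 0) + if a < c then L * x c else 0 := by
  rcases hac.eq_or_lt with rfl | hac
  · simp [entryWeight, haa', haa'.ne]
  rcases hca'.eq_or_lt with rfl | hca'
  · simp [entryWeight, haa']
  · simp [entryWeight, hac, hca', hca'.ne, add_mul]

end EntryWeight

section CoefficientDeterminant

open Finset PowerSeries

variable {R : Type*} [CommRing R]

variable (R) in
/-- The determinant of the matrix of the first `m` coefficients of `m` power series, as an
alternating form in these series. -/
noncomputable def coeffDet (m : ℕ) : R⟦X⟧ [⋀^Fin m]→ₗ[R] R :=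
  Matrix.detRowAlternating.compLinearMap (LinearMap.pi fun k : Fin m => coeff (k : ℕ))

theorem coeffDet_apply {m : ℕ} (f : Fin m → R⟦X⟧) :
    coeffDet R m f = Matrix.det (Matrix.of fun i k : Fin m => coeff (k : ℕ) (f i)) :=
  rfl

theorem coeffDet_succ {m : ℕ} {f : Fin (m + 1) → R⟦X⟧} {g : Fin m → R⟦X⟧}
    (hf : constantCoeff (f 0) = 1) (hg : ∀ i : Fin m, f i.succ - f i.castSucc = X * g i) :
    coeffDet R (m + 1) f = coeffDet R m g := by
  have row_reduction : coeffDet R (m + 1) f =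
      coeffDet R (m + 1) (Fin.cons (f 0) fun i => X * g i) := by
    refine Matrix.det_eq_of_forall_row_eq_smul_add_pred (fun _ => 1) (fun k => ?_) fun i k => ?_
    · simp
    · simp [← hg]
  rw [row_reduction, coeffDet_apply, Matrix.det_succ_column_zero, Fin.sum_univ_succ]
  simp [hf, coeffDet_apply, Matrix.submatrix]

/-- The geometric series `1 / (1 - r X)`. -/
noncomputable def geomSeries (r : R) : R⟦X⟧ :=
  rescale r (mk 1)

theorem geomSeries_mul_one_sub (r : R) : geomSeries r * (1 - C r * X) = 1 := by
  simpa [geomSeries] using congrArg (rescale r) (mk_one_mul_one_sub_eq_one R)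

variable (x : ℕ → R) (L : R)

/-- The power series `∏_{c < a} (1 + x_c X) / ∏_{c ≤ a + d} (1 - L x_c X)`. The case `d = 0` carries
the expansion over triangles; the larger gaps `d` arise in the evaluation as a product. -/
noncomputable def ratioSeries (d a : ℕ) : R⟦X⟧ :=
  (∏ c ∈ range a, (1 + C (x c) * X)) * ∏ c ∈ range (a + d + 1), geomSeries (L * x c)

theorem constantCoeff_ratioSeries (d a : ℕ) : constantCoeff (ratioSeries x L d a) = 1 := by
  have constantCoeff_geomSeries (r : R) : constantCoeff (geomSeries r) = 1 := by
    simpa using congrArg constantCoeff (geomSeries_mul_one_sub r)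
  simp [ratioSeries, constantCoeff_geomSeries]

theorem ratioSeries_succ_sub (d a : ℕ) :
    ratioSeries x L d (a + 1) - ratioSeries x L d a =
      X * ((x a + L * x (a + d + 1)) • ratioSeries x L (d + 1) a) := by
  have h := geomSeries_mul_one_sub (L * x (a + d + 1))
  simp only [ratioSeries, prod_range_succ _ a, prod_range_succ _ (a + d + 1), ← add_assoc,
    add_right_comm a 1 d, smul_eq_C_mul, map_add]
  linear_combination ((∏ c ∈ range a, (1 + C (x c) * X)) *
    ∏ c ∈ range (a + d + 1), geomSeries (L * x c)) * h

theorem ratioSeries_zero_succ_sub (a : ℕ) :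
    ratioSeries x L 0 (a + 1) - ratioSeries x L 0 a =
      X * (x a • ratioSeries x L 0 a + (L * x (a + 1)) • ratioSeries x L 0 (a + 1)) := by
  have h := geomSeries_mul_one_sub (L * x (a + 1))
  simp only [ratioSeries, prod_range_succ _ a, prod_range_succ _ (a + 1), add_zero, smul_eq_C_mul]
  linear_combination ((∏ c ∈ range a, (1 + C (x c) * X)) * (1 + C (x a) * X) *
    ((∏ c ∈ range a, geomSeries (L * x c)) * geomSeries (L * x a))) * h

theorem coeffDet_ratioSeries (m d s : ℕ) :
    coeffDet R m (fun i => ratioSeries x L d (i + s)) =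
      ∏ j ∈ range m, ∏ i ∈ range j, (x (i + s) + L * x (j + s + d)) := by
  induction m generalizing d with
  | zero => simp [coeffDet_apply]
  | succ m ih =>
    have succ_sub (i : Fin m) :
        ratioSeries x L d (i.succ + s) - ratioSeries x L d (i.castSucc + s) =
          X * ((x (i + s) + L * x (i + s + d + 1)) • ratioSeries x L (d + 1) (i + s)) := by
      simpa [add_right_comm] using ratioSeries_succ_sub x L d (i + s)
    rw [coeffDet_succ (constantCoeff_ratioSeries x L _ _) succ_sub, AlternatingMap.map_smul_univ,
      ih, prod_range_succ', ← Finset.prod_range fun i => x (i + s) + L * x (i + s + d + 1),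
      smul_eq_mul, ← prod_mul_distrib, range_zero, prod_empty, mul_one]
    refine prod_congr rfl fun j _ => ?_
    rw [prod_range_succ, mul_comm, add_right_comm j 1 s, add_right_comm (j + s) 1 d, ← add_assoc]

theorem ratioSeries_sub {a a' : ℕ} (h : a < a') :
    ratioSeries x L 0 a' - ratioSeries x L 0 a =
      X * ∑ c ∈ Icc a a', entryWeight x L a c a' • ratioSeries x L 0 c := by
  have filter_lt : {c ∈ Icc a a' | c < a'} = Ico a a' := by grind
  have filter_gt : {c ∈ Icc a a' | a < c} = Ico (a + 1) (a' + 1) := by grind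
  calc
    _ = ∑ c ∈ Ico a a', (ratioSeries x L 0 (c + 1) - ratioSeries x L 0 c) :=
      (sum_Ico_sub _ h.le).symm
    _ = X * (∑ c ∈ Ico a a', x c • ratioSeries x L 0 c +
          ∑ c ∈ Ico (a + 1) (a' + 1), (L * x c) • ratioSeries x L 0 c) := by
      rw [← sum_Ico_add', ← sum_add_distrib, mul_sum]
      exact sum_congr rfl fun c _ => ratioSeries_zero_succ_sub x L c
    _ = X * ∑ c ∈ Icc a a', entryWeight x L a c a' • ratioSeries x L 0 c := by
      rw [← filter_lt, ← filter_gt, sum_filter, sum_filter, ← sum_add_distrib]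
      congr 1
      refine sum_congr rfl fun c hc => ?_
      rw [mem_Icc] at hc
      simp only [entryWeight_eq_add x L h hc.1 hc.2, add_smul, ite_smul, zero_smul]

/-- The strictly increasing sequences `b` interlacing the sequence `a`. -/
def interlacing {m : ℕ} (a : Fin (m + 1) → ℕ) : Finset (Fin m → ℕ) :=
  {b ∈ Fintype.piFinset fun i : Fin m => Icc (a i.castSucc) (a i.succ) | StrictMono b}

theorem mem_interlacing {m : ℕ} {a : Fin (m + 1) → ℕ} {b : Fin m → ℕ} :
    b ∈ interlacing a ↔ (∀ i, a i.castSucc ≤ b i ∧ b i ≤ a i.succ) ∧ StrictMono b := by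
  simp [interlacing]

theorem monotone_of_interlace {α : Type*} [Preorder α] {m : ℕ} {a : Fin (m + 1) → α}
    {b : Fin m → α} (ha : Monotone a) (hab : ∀ i, a i.castSucc ≤ b i ∧ b i ≤ a i.succ) :
    Monotone b := by
  intro i j hij
  rcases hij.eq_or_lt with rfl | hij
  · rfl
  · calc
      b i ≤ a i.succ := (hab i).2
      _ ≤ a j.castSucc := ha (Fin.succ_le_castSucc_iff.2 hij)
      _ ≤ b j := (hab j).1

theorem coeffDet_eq_sum_interlacing {m : ℕ} {a : Fin (m + 1) → ℕ} (ha : StrictMono a) :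
    coeffDet R (m + 1) (fun i => ratioSeries x L 0 (a i)) =
      ∑ b ∈ interlacing a, (∏ i, entryWeight x L (a i.castSucc) (b i) (a i.succ)) *
        coeffDet R m (fun i => ratioSeries x L 0 (b i)) := by
  have expansion := (coeffDet R m).toMultilinearMap.map_sum_finset
    (fun i c => entryWeight x L (a i.castSucc) c (a i.succ) • ratioSeries x L 0 c)
    (fun i => Icc (a i.castSucc) (a i.succ))
  rw [coeffDet_succ (constantCoeff_ratioSeries x L _ _)
    fun i => ratioSeries_sub x L (ha i.castSucc_lt_succ)]
  refine expansion.trans ?_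
  simp only [AlternatingMap.coe_multilinearMap, AlternatingMap.map_smul_univ, smul_eq_mul]
  refine (sum_subset (filter_subset _ _) fun b hb hb' => ?_).symm
  have hab : ∀ i, a i.castSucc ≤ b i ∧ b i ≤ a i.succ := by simpa using hb
  have not_injective : ¬ Function.Injective fun i => ratioSeries x L 0 (b i) := by
    intro hinj
    have hb_inj : Function.Injective b := hinj.of_comp (f := ratioSeries x L 0)
    have hb_mono := (monotone_of_interlace ha.monotone hab).strictMono_of_injective hb_inj
    exact hb' (mem_interlacing.2 ⟨hab, hb_mono⟩)
  rw [AlternatingMap.map_eq_zero_of_not_injective _ _ not_injective, mul_zero]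

end CoefficientDeterminant

section Triangles

open Finset

/-- A monotone triangle with `m` columns: column `j` has the entries `β j i` with `i < m - j`, is
strictly increasing, and is interlaced by column `j + 1`. Entries outside this range are normalized
to `0`, which makes a triangle determined by its proper entries. -/
structure IsTriangle (m : ℕ) (β : ℕ → ℕ → ℕ) : Prop where
  eq_zero : ∀ j i, m ≤ j + i → β j i = 0
  interlace : ∀ j i, j + i + 1 < m → β j i ≤ β (j + 1) i ∧ β (j + 1) i ≤ β j (i + 1)
  lt_succ : ∀ j i, j + i + 1 < m → β j i < β j (i + 1)

/-- The array with first column `a`, extended by `0`, followed by the columns of `β`. -/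
def consColumn {m : ℕ} (a : Fin m → ℕ) (β : ℕ → ℕ → ℕ) : ℕ → ℕ → ℕ
  | 0, i => if h : i < m then a ⟨i, h⟩ else 0
  | j + 1, i => β j i

theorem consColumn_zero_apply {m : ℕ} (a : Fin m → ℕ) (β : ℕ → ℕ → ℕ) (i : Fin m) :
    consColumn a β 0 i = a i :=
  dif_pos i.2

theorem consColumn_injective {m : ℕ} (a : Fin m → ℕ) : Function.Injective (consColumn a) :=
  fun _ _ h => funext fun j => congrFun h (j + 1)

theorem IsTriangle.cons {m : ℕ} {a : Fin (m + 1) → ℕ} {β : ℕ → ℕ → ℕ} (hβ : IsTriangle m β)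
    (ha : StrictMono a) (hab : ∀ i : Fin m, a i.castSucc ≤ β 0 i ∧ β 0 i ≤ a i.succ) :
    IsTriangle (m + 1) (consColumn a β) where
  eq_zero
    | 0, i, h => dif_neg (by omega)
    | j + 1, i, h => hβ.eq_zero j i (by omega)
  interlace
    | 0, i, h => by
      have hi : i < m := by omega
      simpa [consColumn, hi, hi.trans m.lt_succ_self] using hab ⟨i, hi⟩
    | j + 1, i, h => hβ.interlace j i (by omega)
  lt_succ
    | 0, i, h => by
      have hi : i < m := by omega
      simpa [consColumn, hi, hi.trans m.lt_succ_self] using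
        ha (Fin.castSucc_lt_succ (i := ⟨i, hi⟩))
    | j + 1, i, h => hβ.lt_succ j i (by omega)

theorem IsTriangle.tail {m : ℕ} {β : ℕ → ℕ → ℕ} (hβ : IsTriangle (m + 1) β) :
    IsTriangle m fun j => β (j + 1) where
  eq_zero j i h := hβ.eq_zero (j + 1) i (by omega)
  interlace j i h := hβ.interlace (j + 1) i (by omega)
  lt_succ j i h := hβ.lt_succ (j + 1) i (by omega)

theorem IsTriangle.strictMono_column_zero {m : ℕ} {β : ℕ → ℕ → ℕ} (hβ : IsTriangle m β) :
    StrictMono fun i : Fin m => β 0 i := by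
  cases m with
  | zero => exact fun i => i.elim0
  | succ m => exact Fin.strictMono_iff_lt_succ.2 fun i => hβ.lt_succ 0 i (by simp)

theorem IsTriangle.consColumn_tail {m : ℕ} {a : Fin m → ℕ} {β : ℕ → ℕ → ℕ} (hβ : IsTriangle m β)
    (ha : ∀ i : Fin m, β 0 i = a i) : consColumn a (fun j => β (j + 1)) = β := by
  funext j i
  cases j with
  | zero =>
    by_cases h : i < m
    · simp [consColumn, h, ← ha]
    · simp [consColumn, h, hβ.eq_zero 0 i (by omega)]
  | succ j => rfl

theorem isTriangle_zero_iff {β : ℕ → ℕ → ℕ} : IsTriangle 0 β ↔ β = 0 := by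
  refine ⟨fun hβ => ?_, ?_⟩
  · ext j i
    exact hβ.eq_zero j i (Nat.zero_le _)
  · rintro rfl
    exact ⟨by simp, by simp, by simp⟩

/-- The monotone triangles with first column `a`, built by prepending `a` to the triangles whose
first column interlaces it; see `mem_triangles`. -/
noncomputable def triangles : (m : ℕ) → (Fin m → ℕ) → Finset (ℕ → ℕ → ℕ)
  | 0, _ => {0}
  | m + 1, a => ((interlacing a).biUnion (triangles m)).image (consColumn a)

theorem mem_triangles_succ {m : ℕ} {a : Fin (m + 1) → ℕ} {β : ℕ → ℕ → ℕ} :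
    β ∈ triangles (m + 1) a ↔ ∃ b ∈ interlacing a, ∃ γ ∈ triangles m b, consColumn a γ = β := by
  simp only [triangles, mem_image, mem_biUnion]
  grind

theorem apply_zero_of_mem_triangles {m : ℕ} {a : Fin m → ℕ} {β : ℕ → ℕ → ℕ}
    (hβ : β ∈ triangles m a) (i : Fin m) : β 0 i = a i := by
  cases m with
  | zero => exact i.elim0
  | succ m =>
    obtain ⟨b, -, γ, -, rfl⟩ := mem_triangles_succ.1 hβ
    exact consColumn_zero_apply a γ i

theorem pairwise_disjoint_triangles (m : ℕ) : Pairwise (Function.onFun Disjoint (triangles m)) := by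
  intro a b hab
  refine disjoint_left.2 fun β ha hb => hab (funext fun i => ?_)
  rw [← apply_zero_of_mem_triangles ha, ← apply_zero_of_mem_triangles hb]

theorem mem_triangles {m : ℕ} {a : Fin m → ℕ} (ha : StrictMono a) {β : ℕ → ℕ → ℕ} :
    β ∈ triangles m a ↔ IsTriangle m β ∧ ∀ i : Fin m, β 0 i = a i := by
  induction m generalizing β with
  | zero => simp [triangles, isTriangle_zero_iff]
  | succ m ih =>
    constructor
    · intro hβ
      refine ⟨?_, apply_zero_of_mem_triangles hβ⟩
      obtain ⟨b, hb, γ, hγ, rfl⟩ := mem_triangles_succ.1 hβ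
      obtain ⟨hab, hmono⟩ := mem_interlacing.1 hb
      obtain ⟨hγ, hγb⟩ := (ih hmono).1 hγ
      exact hγ.cons ha fun i => hγb i ▸ hab i
    · rintro ⟨hβ, h0⟩
      have hmono := hβ.tail.strictMono_column_zero
      have hab (i : Fin m) : a i.castSucc ≤ β 1 i ∧ β 1 i ≤ a i.succ := by
        simpa [← h0] using hβ.interlace 0 i (by simp)
      exact mem_triangles_succ.2 ⟨_, mem_interlacing.2 ⟨hab, hmono⟩, _,
        (ih hmono).2 ⟨hβ.tail, fun _ => rfl⟩, hβ.consColumn_tail h0⟩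

/-- The product over the entries of a triangle outside its first column of `w a c a'`, where `c` is
the entry and `a`, `a'` are the two entries of the preceding column between which it lies. -/
def triangleWeight {M : Type*} [CommMonoid M] (w : ℕ → ℕ → ℕ → M) (m : ℕ) (β : ℕ → ℕ → ℕ) : M :=
  ∏ j ∈ range m, ∏ i ∈ range (m - (j + 1)), w (β j i) (β (j + 1) i) (β j (i + 1))

theorem triangleWeight_consColumn {M : Type*} [CommMonoid M] (w : ℕ → ℕ → ℕ → M) {m : ℕ}
    (a : Fin (m + 1) → ℕ) (β : ℕ → ℕ → ℕ) :
    triangleWeight w (m + 1) (consColumn a β) =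
      (∏ i : Fin m, w (a i.castSucc) (β 0 i) (a i.succ)) * triangleWeight w m β := by
  rw [triangleWeight, prod_range_succ', mul_comm, zero_add, Nat.add_sub_cancel, Finset.prod_range]
  congr 1
  · refine prod_congr rfl fun i _ => ?_
    rw [← consColumn_zero_apply a β i.castSucc, ← consColumn_zero_apply a β i.succ]
    rfl
  · refine prod_congr rfl fun j _ => ?_
    rw [Nat.add_sub_add_right]
    rfl

theorem sum_triangles_succ {R : Type*} [CommSemiring R] (w : ℕ → ℕ → ℕ → R) {m : ℕ}
    (a : Fin (m + 1) → ℕ) :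
    ∑ β ∈ triangles (m + 1) a, triangleWeight w (m + 1) β =
      ∑ b ∈ interlacing a, (∏ i, w (a i.castSucc) (b i) (a i.succ)) *
        ∑ β ∈ triangles m b, triangleWeight w m β := by
  rw [triangles, sum_image (consColumn_injective a).injOn,
    sum_biUnion ((pairwise_disjoint_triangles m).set_pairwise _)]
  refine sum_congr rfl fun b _ => ?_
  rw [mul_sum]
  refine sum_congr rfl fun β hβ => ?_
  simp only [triangleWeight_consColumn, apply_zero_of_mem_triangles hβ]

theorem sum_triangles_eq_coeffDet {R : Type*} [CommRing R] (x : ℕ → R) (L : R) {m : ℕ}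
    {a : Fin m → ℕ} (ha : StrictMono a) :
    ∑ β ∈ triangles m a, triangleWeight (entryWeight x L) m β =
      coeffDet R m fun i => ratioSeries x L 0 (a i) := by
  induction m with
  | zero => simp [triangles, triangleWeight, coeffDet_apply]
  | succ m ih =>
    rw [sum_triangles_succ, coeffDet_eq_sum_interlacing x L ha]
    exact sum_congr rfl fun b hb => by rw [ih (mem_interlacing.1 hb).2]

end Triangles

section Arrays

open Finset

/-- The triangle formed by the columns of an array, whose rows are indexed from `1`. -/
def columns (α : ℕ → ℕ → ℕ) : ℕ → ℕ → ℕ :=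
  fun j i => α (i + 1) j

/-- The array with the given columns, its rows being indexed from `1` and row `0` being `0`. -/
def ofColumns (β : ℕ → ℕ → ℕ) : ℕ → ℕ → ℕ
  | 0, _ => 0
  | i + 1, j => β j i

theorem isTriangle_columns {n : ℕ} {α : ℕ → ℕ → ℕ} (hα : IsMT n α) :
    IsTriangle n (columns α) := by
  obtain ⟨eq_zero, -, -, row_le, column_lt, le_southwest⟩ := hα
  exact
    { eq_zero := fun j i h => eq_zero (i + 1) j (by omega)
      interlace := fun j i h =>
        ⟨row_le (i + 1) j (by omega) (by omega) (by omega),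
          le_southwest (i + 1) (j + 1) (by omega) (by omega) (by omega) (by omega)⟩
      lt_succ := fun j i h => column_lt (i + 1) j (by omega) (by omega) (by omega) }

theorem IsTriangle.bounds {m : ℕ} {β : ℕ → ℕ → ℕ} (hβ : IsTriangle m β)
    (h0 : ∀ i < m, β 0 i = i + 1) {j i : ℕ} (hji : j + i < m) :
    i + 1 ≤ β j i ∧ β j i ≤ i + 1 + j := by
  induction j generalizing i with
  | zero => simp [h0 i (by omega)]
  | succ j ih =>
    have := hβ.interlace j i (by omega)
    have := ih (i := i) (by omega)
    have := ih (i := i + 1) (by omega)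
    omega

theorem isMT_ofColumns {n : ℕ} {β : ℕ → ℕ → ℕ} (hβ : IsTriangle n β)
    (h0 : ∀ i < n, β 0 i = i + 1) : IsMT n (ofColumns β) := by
  refine ⟨?_, ?_, ?_, ?_, ?_, ?_⟩
  · rintro (_ | i) j h
    · rfl
    · exact hβ.eq_zero j i (by omega)
  · rintro (_ | i) _ h'
    · rfl
    · exact h0 i h'
  · rintro (_ | i) j h h' hj
    · omega
    · exact hβ.bounds h0 (by omega)
  · rintro (_ | i) j h h' hj
    · omega
    · exact (hβ.interlace j i (by omega)).1
  · rintro (_ | i) j h h' hj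
    · omega
    · exact hβ.lt_succ j i (by omega)
  · rintro (_ | i) (_ | j) h h' hj hj'
    · omega
    · omega
    · omega
    · exact (hβ.interlace j i (by omega)).2

theorem bijOn_columns (n : ℕ) :
    Set.BijOn columns {α | IsMT n α} (triangles n fun i : Fin n => (i : ℕ) + 1) := by
  have mem_iff (β : ℕ → ℕ → ℕ) : β ∈ triangles n (fun i : Fin n => (i : ℕ) + 1) ↔
      IsTriangle n β ∧ ∀ i : Fin n, β 0 i = i + 1 :=
    mem_triangles (Fin.val_strictMono.add_const 1)
  refine Set.InvOn.bijOn (f' := ofColumns) ⟨fun α hα => ?_, fun β _ => rfl⟩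
    (fun α hα => ?_) fun β hβ => ?_
  · funext i j
    cases i with
    | zero => exact (hα.1 0 j (by omega)).symm
    | succ i => rfl
  · exact (mem_iff _).2 ⟨isTriangle_columns hα, fun i => hα.2.1 _ (by omega) (by omega)⟩
  · obtain ⟨hβ, h0⟩ := (mem_iff β).1 hβ
    exact isMT_ofColumns hβ fun i hi => h0 ⟨i, hi⟩

theorem prod_filter_Icc_product {M : Type*} [CommMonoid M] {n : ℕ} {P : ℕ × ℕ → Prop}
    [DecidablePred P] {k : ℕ → ℕ} (hP : ∀ i, ∀ j < n, i < n ∧ P (i + 1, j + 1) ↔ i < k j)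
    (f : ℕ → ℕ → M) :
    ∏ p ∈ Icc 1 n ×ˢ Icc 1 n with P p, f p.1 p.2 =
      ∏ j ∈ range n, ∏ i ∈ range (k j), f (i + 1) (j + 1) := by
  rw [prod_sigma']
  refine prod_bij' (fun p _ => ⟨p.2 - 1, p.1 - 1⟩) (fun q _ => (q.2 + 1, q.1 + 1))
    (fun p hp => ?_) (fun q hq => ?_) (fun p hp => ?_) (fun q _ => rfl) (fun p hp => ?_)
  · have := hP (p.1 - 1) (p.2 - 1)
    grind
  · have := hP q.2 q.1
    grind
  · grind
  · grind

/-- The positions `(i, j)` with `j ≥ 1` of the entries of an array of order `n`. -/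
def innerPositions (n : ℕ) : Finset (ℕ × ℕ) :=
  {p ∈ Icc 1 n ×ˢ Icc 1 n | p.2 ≤ n - p.1}

theorem mem_innerPositions {n : ℕ} {p : ℕ × ℕ} :
    p ∈ innerPositions n ↔ 1 ≤ p.1 ∧ 1 ≤ p.2 ∧ p.1 + p.2 ≤ n := by
  simp only [innerPositions, mem_filter, mem_product, mem_Icc]
  omega

theorem Ccnt_eq_card_add_one {n : ℕ} {α : ℕ → ℕ → ℕ} (hα : IsMT n α) {k : ℕ} (hk : k ∈ Icc 1 n) :
    Ccnt n α k = #{p ∈ innerPositions n | α p.1 p.2 = k} + 1 := by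
  have notMem : (k, 0) ∉ {p ∈ innerPositions n | α p.1 p.2 = k} := by simp [mem_innerPositions]
  rw [Ccnt, ← card_insert_of_notMem notMem]
  congr 1
  ext ⟨i, j⟩
  have column_zero := hα.2.1 i
  simp only [mem_filter, mem_product, mem_Icc, mem_range, mem_insert, mem_innerPositions,
    Prod.mk.injEq] at hk ⊢
  rcases Nat.eq_zero_or_pos j with rfl | hj <;> grind

theorem prod_innerPositions_eq_prod_pow {M : Type*} [CommMonoid M] (x : ℕ → M) {n : ℕ}
    {α : ℕ → ℕ → ℕ} (hα : IsMT n α) :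
    ∏ p ∈ innerPositions n, x (α p.1 p.2) = ∏ k ∈ Icc 1 n, x k ^ (Ccnt n α k - 1) := by
  have maps_to : ∀ p ∈ innerPositions n, α p.1 p.2 ∈ Icc 1 n := by
    intro p hp
    rw [mem_innerPositions] at hp
    obtain ⟨-, -, bounds, -⟩ := hα
    have := bounds p.1 p.2 (by omega) (by omega) (by omega)
    rw [mem_Icc]
    omega
  rw [← prod_fiberwise_of_maps_to maps_to]
  refine prod_congr rfl fun k hk => ?_
  rw [Ccnt_eq_card_add_one hα hk, Nat.add_sub_cancel]
  exact prod_eq_pow_card fun p hp => by rw [(mem_filter.1 hp).2]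

theorem triangleWeight_columns {M : Type*} [CommMonoid M] (w : ℕ → ℕ → ℕ → M) (n : ℕ)
    (α : ℕ → ℕ → ℕ) :
    triangleWeight w n (columns α) =
      ∏ p ∈ innerPositions n, w (α p.1 (p.2 - 1)) (α p.1 p.2) (α (p.1 + 1) (p.2 - 1)) :=
  (prod_filter_Icc_product (k := fun j => n - (j + 1)) (fun i j _ => by dsimp only; omega)
    fun i j => w (α i (j - 1)) (α i j) (α (i + 1) (j - 1))).symm

theorem triangleWeight_entryWeight_columns {R : Type*} [CommSemiring R] (x : ℕ → R) (L : R)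
    {n : ℕ} {α : ℕ → ℕ → ℕ} (hα : IsMT n α) :
    triangleWeight (entryWeight x L) n (columns α) =
      L ^ Ecnt n α * (1 + L) ^ Ncnt n α * ∏ k ∈ Icc 1 n, x k ^ (Ccnt n α k - 1) := by
  rw [triangleWeight_columns, ← prod_innerPositions_eq_prod_pow x hα]
  simp only [entryWeight, prod_mul_distrib, ← prod_filter, prod_const, innerPositions,
    filter_filter]
  rfl

theorem stmt14_general {R : Type*} [CommRing R] (x : ℕ → R) (L : R) (n : ℕ) :
    ∏ p ∈ Icc 1 n ×ˢ Icc 1 n with p.1 < p.2, (x p.1 + L * x p.2) =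
      ∑ᶠ α ∈ {α : ℕ → ℕ → ℕ | IsMT n α},
        L ^ Ecnt n α * (1 + L) ^ Ncnt n α * ∏ k ∈ Icc 1 n, x k ^ (Ccnt n α k - 1) :=
  calc
    _ = ∏ j ∈ range n, ∏ i ∈ range j, (x (i + 1) + L * x (j + 1)) :=
      prod_filter_Icc_product (k := id) (fun i j _ => by dsimp only [id]; omega)
        fun i j => x i + L * x j
    _ = coeffDet R n fun i => ratioSeries x L 0 (i + 1) := (coeffDet_ratioSeries x L n 0 1).symm
    _ = ∑ β ∈ triangles n fun i => i + 1, triangleWeight (entryWeight x L) n β :=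
      (sum_triangles_eq_coeffDet x L (Fin.val_strictMono.add_const 1)).symm
    _ = ∑ᶠ β ∈ (triangles n fun i => i + 1 : Set (ℕ → ℕ → ℕ)),
          triangleWeight (entryWeight x L) n β := (finsum_mem_coe_finset _ _).symm
    _ = _ := (finsum_mem_eq_of_bijOn columns (bijOn_columns n)
      fun α hα => (triangleWeight_entryWeight_columns x L hα).symm).symm

end Arrays

/-- The tournament generating function expanded as a sum over ASM arrays, in the
polynomial ring `ℤ[λ, x_1, …, x_n]` (realized inside `MvPolynomial (Option ℕ) ℤ`,
with `X none = λ` and `X (some k) = x_k`):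
`∏_{1≤i<j≤n} (x_i + λ x_j) = Σ_{α ∈ MT_n} λ^{E(α)} (1+λ)^{N(α)} ∏_k x_k^{C_k(α)-1}`. -/
theorem stmt14 (n : ℕ) (hn : 1 ≤ n) :
    (∏ p ∈ (Finset.Icc 1 n ×ˢ Finset.Icc 1 n).filter (fun p => p.1 < p.2),
        (MvPolynomial.X (some p.1) +
          MvPolynomial.X none * MvPolynomial.X (some p.2) :
            MvPolynomial (Option ℕ) ℤ)) =
      ∑ᶠ α ∈ {α : ℕ → ℕ → ℕ | IsMT n α},
        MvPolynomial.X none ^ Ecnt n α *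
          (1 + MvPolynomial.X none) ^ Ncnt n α *
          ∏ k ∈ Finset.Icc 1 n, MvPolynomial.X (some k) ^ (Ccnt n α k - 1) :=
  stmt14_general (fun k => MvPolynomial.X (some k)) (MvPolynomial.X none) n
end
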